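/- arXiv:2505.21989 — 4 statements merged into one kernel-verified Lean document; each statement's English description precedes it below -/
import Mathlib

section
/- For all integers n ≥ 0, the number of (2,3)-regular overpartitions satisfies R̄_{2,3}(27n) ≡ R̄_{2,3}(3n) (mod 3). -/
/-- Number of partitions of `a` with no part divisible by `ℓ` or `μ`
(the non-overlined parts of an `(ℓ,μ)`-regular overpartition). -/
def regularCount (ℓ μ a : ℕ) : ℕ :=
  Fintype.card {p : a.Partition // ∀ i ∈ p.parts, ¬ ℓ ∣ i ∧ ¬ μ ∣ i}

/-- Number of partitions of `a` into distinct parts with no part divisible by `ℓ` or `μ`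
(the overlined parts of an `(ℓ,μ)`-regular overpartition). -/
def regularDistinctCount (ℓ μ a : ℕ) : ℕ :=
  Fintype.card {p : a.Partition // p.parts.Nodup ∧ ∀ i ∈ p.parts, ¬ ℓ ∣ i ∧ ¬ μ ∣ i}

/-- `Rbar ℓ μ n` is the number of `(ℓ,μ)`-regular overpartitions of `n`: pairs `(λ, δ)`
where `λ` is a partition, `δ` is a partition into distinct parts, `|λ| + |δ| = n`,
and no part of `λ` or `δ` is divisible by `ℓ` or by `μ`. -/
def Rbar (ℓ μ n : ℕ) : ℕ :=
  ∑ ab ∈ Finset.HasAntidiagonal.antidiagonal n, regularCount ℓ μ ab.1 * regularDistinctCount ℓ μ ab.2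

open PowerSeries Finset Filter
open scoped PowerSeries.WithPiTopology

namespace RB

abbrev R := ZMod 3

instance : Fact (Nat.Prime 3) := ⟨by norm_num⟩

lemma summ {ι : Type*} (c : ι → R) (e : ι → ℕ) (h : ∀ n, {i | e i ≤ n}.Finite) :
    Summable (fun i => (monomial (e i) (c i) : R⟦X⟧)) := by
  rw [WithPiTopology.summable_iff_summable_coeff]
  intro d
  apply summable_of_hasFiniteSupport
  refine (h d).subset ?_
  intro i hi
  simp only [Function.mem_support, coeff_monomial] at hi
  simp only [Set.mem_ofPred_eq]
  by_contra hh
  apply hi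
  rw [if_neg]; omega

/-- terms of theta series -/
noncomputable def tm (s : R) (k : ℕ) (x : ℤ) : R⟦X⟧ := monomial (k * x.natAbs ^ 2) (s ^ x.natAbs)

lemma fin1 (k : ℕ) (hk : 0 < k) (n : ℕ) : {x : ℤ | k * x.natAbs ^ 2 ≤ n}.Finite := by
  refine (Set.finite_Icc (-(n:ℤ)) n).subset ?_
  intro x hx
  simp only [Set.mem_ofPred_eq] at hx
  have : x.natAbs ≤ n := by nlinarith [Nat.zero_le x.natAbs]
  simp only [Set.mem_Icc]; omega

noncomputable def th (s : R) (k : ℕ) : R⟦X⟧ := ∑' x, tm s k x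

lemma hth (s : R) (k : ℕ) (hk : 0 < k) : HasSum (tm s k) (th s k) :=
  (summ _ _ (fin1 k hk)).hasSum

lemma hth2 (s t : R) (k l : ℕ) (hk : 0 < k) (hl : 0 < l) :
    HasSum (fun p : ℤ × ℤ => (monomial (k * p.1.natAbs ^ 2 + l * p.2.natAbs ^ 2)
      (s ^ p.1.natAbs * t ^ p.2.natAbs) : R⟦X⟧)) (th s k * th t l) := by
  have hs : Summable (fun p : ℤ × ℤ => (monomial (k * p.1.natAbs ^ 2 + l * p.2.natAbs ^ 2)
      (s ^ p.1.natAbs * t ^ p.2.natAbs) : R⟦X⟧)) := by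
    apply summ
    intro n
    refine ((fin1 k hk n).prod (fin1 l hl n)).subset ?_
    rintro ⟨x, y⟩ h
    simp only [Set.mem_ofPred_eq] at h
    simp only [Set.mem_prod, Set.mem_ofPred_eq]
    omega
  have := (hth s k hk).mul (hth t l hl) (by simpa [tm, monomial_mul_monomial] using hs)
  simpa [tm, monomial_mul_monomial] using this

lemma cube3 (a : R) : a ^ 3 = a := by revert a; decide

lemma hasSum_cube {ι : Type*} {c : ι → R} {e : ι → ℕ} {f : R⟦X⟧}
    (h : HasSum (fun i => (monomial (e i) (c i) : R⟦X⟧)) f) :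
    HasSum (fun i => (monomial (3 * e i) (c i) : R⟦X⟧)) (f ^ 3) := by
  have : CharP R⟦X⟧ 3 := charP_of_injective_ringHom (f := (C : R →+* R⟦X⟧)) C_injective 3
  have := h.map (frobenius R⟦X⟧ 3) (by
    change Continuous (fun x : R⟦X⟧ => x ^ 3)
    fun_prop)
  rw [frobenius_def] at this
  convert this using 2 with i
  simp [frobenius_def, monomial_pow, cube3]

lemma th_cube (s : R) (k : ℕ) (hk : 0 < k) : th s k ^ 3 = th s (3 * k) := by
  refine (hasSum_cube (hth s k hk)).unique ?_
  have := hth s (3 * k) (by omega)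
  unfold tm at this
  simpa only [mul_assoc] using this

noncomputable def U : R⟦X⟧ →ₗ[R] R⟦X⟧ where
  toFun f := PowerSeries.mk fun n => coeff (3 * n) f
  map_add' f g := by ext; simp
  map_smul' f g := by ext; simp

@[simp] lemma coeff_U (n : ℕ) (f : R⟦X⟧) : coeff n (U f) = coeff (3 * n) f := by simp [U]

lemma U_cont : Continuous U := by
  rw [continuous_iff_continuousAt]
  intro f
  rw [ContinuousAt, WithPiTopology.tendsto_iff_coeff_tendsto]
  intro d
  simp only [coeff_U]
  exact (WithPiTopology.continuous_coeff R (3 * d)).tendsto f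

lemma U_mono (e : ℕ) (a : R) : U (monomial e a) = if 3 ∣ e then monomial (e / 3) a else 0 := by
  ext n
  rw [coeff_U, coeff_monomial]
  split_ifs with h1 h2 h2
  · rw [coeff_monomial, if_pos (by omega)]
  · omega
  · rw [coeff_monomial, if_neg (by omega)]
  · simp

lemma mono_eq (d : ℕ) (a : R) : (monomial d a : R⟦X⟧) = C a * X ^ d := by
  ext n
  simp [coeff_monomial, coeff_X_pow]

lemma U_mono_mul (d : ℕ) (a : R) (g : R⟦X⟧) :
    U (monomial (3 * d) a * g) = monomial d a * U g := by
  ext n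
  rw [coeff_U, mono_eq, mono_eq, mul_assoc, mul_assoc, coeff_C_mul, coeff_C_mul,
    coeff_X_pow_mul', coeff_X_pow_mul', coeff_U]
  congr 1
  split_ifs with h1 h2 h2
  · congr 2; omega
  · omega
  · omega
  · rfl

lemma U_cube_mul (f g : R⟦X⟧) : U (f ^ 3 * g) = f * U g := by
  have h := hasSum_of_monomials_self f
  have h1 := (((hasSum_cube h).mul_right g).map U U_cont)
  have h2 := h.mul_right (U g)
  have e : (⇑U ∘ fun i => (monomial (3 * i)) ((coeff i) f) * g) =
      (fun i => (monomial i) ((coeff i) f) * U g) := by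
    funext d
    simp [U_mono_mul]
  rw [e] at h1
  exact h1.unique h2

lemma U_th (s : R) (hs : s ^ 2 = 1) : U (th s 1) = th s 3 := by
  have h1 := (hth s 1 one_pos).map U U_cont
  have hinj : Function.Injective (fun x : ℤ => 3 * x) := fun x y h => by simpa using h
  rw [← hinj.hasSum_iff] at h1
  · refine h1.unique ?_
    convert hth s 3 (by norm_num) using 1
    funext x
    simp only [Function.comp, tm, U_mono, Int.natAbs_mul]
    rw [if_pos ⟨3 * x.natAbs ^ 2, by simp; ring⟩]
    congr 1
    · congr 1; simp only [Int.reduceAbs]; rw [show 1 * (3 * x.natAbs)^2 = 3 * (3 * x.natAbs ^ 2) by ring]; omega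
    · simp only [Int.reduceAbs]; rw [show 3 * x.natAbs = 2 * x.natAbs + x.natAbs by ring, pow_add, pow_mul, hs]; simp
  · intro x hx
    simp only [Function.comp, tm, U_mono]
    rw [if_neg]
    intro h
    apply hx
    rw [one_mul] at h
    have := Nat.prime_three.dvd_of_dvd_pow h
    obtain ⟨c, hc⟩ : (3:ℤ) ∣ x := by omega
    exact ⟨c, hc.symm⟩

end RB
namespace RB

lemma negpow_eq {a b : ℕ} (h : a % 2 = b % 2) : (-1 : R) ^ a = (-1) ^ b := by
  rw [neg_one_pow_eq_pow_mod_two a, neg_one_pow_eq_pow_mod_two b, h]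

lemma three_zero : (3 : R⟦X⟧) = 0 := by
  have : (3 : R) = 0 := by decide
  rw [← map_ofNat C 3, this, map_zero]

/-- φ(q) φ(-q) = φ(-q²)² -/
lemma phi_mul : th 1 1 * th (-1) 1 = th (-1) 2 ^ 2 := by
  have h1 := hth2 1 (-1) 1 1 one_pos one_pos
  have h1' := (Equiv.prodComm ℤ ℤ).hasSum_iff.mpr h1
  have h2 := h1.add h1'
  have hinj : Function.Injective (fun p : ℤ × ℤ => (p.1 + p.2, p.1 - p.2)) := by
    rintro ⟨a, b⟩ ⟨c, d⟩ h
    simp only [Prod.mk.injEq] at h ⊢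
    omega
  rw [← hinj.hasSum_iff] at h2
  · have h3 := hth2 (-1) (-1) 2 2 two_pos two_pos
    have h4 := h3.add h3
    have e : ∀ a b : ℤ, 1 * (a + b).natAbs ^ 2 + 1 * (a - b).natAbs ^ 2 =
        2 * a.natAbs ^ 2 + 2 * b.natAbs ^ 2 := by
      intro a b
      zify
      simp only [sq_abs]; ring
    have h5 := h2.unique (a₂ := th (-1) 2 * th (-1) 2 + th (-1) 2 * th (-1) 2) (by
      refine h4.congr_fun ?_
      rintro ⟨a, b⟩
      simp only [Function.comp, Equiv.prodComm_apply, Prod.swap]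
      rw [e, show 1 * (a - b).natAbs ^ 2 + 1 * (a + b).natAbs ^ 2 =
        2 * a.natAbs ^ 2 + 2 * b.natAbs ^ 2 by rw [add_comm, e]]
      simp only [one_pow, one_mul]
      rw [negpow_eq (show (a - b).natAbs % 2 = (a.natAbs + b.natAbs) % 2 by omega),
        negpow_eq (show (a + b).natAbs % 2 = (a.natAbs + b.natAbs) % 2 by omega), pow_add])
    linear_combination (-1) * h5 + (th 1 1 * th (-1) 1 - th (-1) 2 ^ 2) * three_zero
  · rintro ⟨x, y⟩ hx
    have hxy : (x + y) % 2 = 1 := by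
      by_contra hc
      apply hx
      exact ⟨((x + y) / 2, (x - y) / 2), by simp only [Prod.mk.injEq]; omega⟩
    simp only [Function.comp, Equiv.prodComm_apply, Prod.swap, one_pow, one_mul]
    rw [add_comm (y.natAbs ^ 2), ← map_add,
      negpow_eq (show x.natAbs % 2 = (y.natAbs + 1) % 2 by omega), pow_succ (-1 : R)]
    simp

lemma h_ite {ι κ : Type*} {f : ι → R⟦X⟧} {g : κ → R⟦X⟧} {F : R⟦X⟧} (h : HasSum g F)
    (j : κ → ι) (hj : Function.Injective j) (p : ι → Prop) [DecidablePred p]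
    (hp : ∀ i, p i ↔ i ∈ Set.range j) (hfg : ∀ k, f (j k) = g k) :
    HasSum (fun i => if p i then f i else 0) F := by
  rw [← hj.hasSum_iff]
  · refine h.congr_fun ?_
    intro k
    simp only [Function.comp]
    rw [if_pos ((hp _).2 ⟨k, rfl⟩), hfg]
  · intro x hx
    rw [if_neg (fun h => hx ((hp _).1 h))]

lemma U_X : U (th 1 1 * th (-1) 2) + th 1 3 * th (-1) 6 = 2 * (th (-1) 1 * th (-1) 2) := by
  have h1 := (hth2 1 (-1) 1 2 one_pos two_pos).map U U_cont
  let f : ℤ × ℤ → R⟦X⟧ := fun p =>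
    monomial ((1 * p.1.natAbs ^ 2 + 2 * p.2.natAbs ^ 2) / 3) ((-1) ^ p.2.natAbs)
  have hY := hth2 (-1) (-1) 1 2 one_pos two_pos
  have hZ := hth2 1 (-1) 3 6 (by norm_num) (by norm_num)
  have a1 : HasSum (fun p : ℤ × ℤ => if 3 ∣ p.1 - p.2 then f p else 0)
      (th (-1) 1 * th (-1) 2) := by
    refine h_ite hY (fun q => (q.1 - 2 * q.2, q.1 + q.2)) ?_ _ ?_ ?_
    · rintro ⟨a, b⟩ ⟨c, d⟩ h
      simp only [Prod.mk.injEq] at h ⊢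
      omega
    · rintro ⟨x, y⟩
      simp only [Set.mem_range, Prod.exists, Prod.mk.injEq]
      constructor
      · intro h; exact ⟨(x + 2 * y) / 3, (y - x) / 3, by omega⟩
      · rintro ⟨a, b, h⟩; omega
    · rintro ⟨u, v⟩
      have e : 1 * (u - 2 * v).natAbs ^ 2 + 2 * (u + v).natAbs ^ 2 =
          3 * (1 * u.natAbs ^ 2 + 2 * v.natAbs ^ 2) := by
        zify
        simp only [sq_abs]; ring
      simp only [f]
      rw [e, Nat.mul_div_cancel_left _ (by norm_num),
        negpow_eq (show (u + v).natAbs % 2 = (u.natAbs + v.natAbs) % 2 by omega), pow_add]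
  have a2 : HasSum (fun p : ℤ × ℤ => if 3 ∣ p.1 + p.2 then f p else 0)
      (th (-1) 1 * th (-1) 2) := by
    refine h_ite hY (fun q => (q.1 - 2 * q.2, - q.1 - q.2)) ?_ _ ?_ ?_
    · rintro ⟨a, b⟩ ⟨c, d⟩ h
      simp only [Prod.mk.injEq] at h ⊢
      omega
    · rintro ⟨x, y⟩
      simp only [Set.mem_range, Prod.exists, Prod.mk.injEq]
      constructor
      · intro h; exact ⟨(x - 2 * y) / 3, (- y - x) / 3, by omega⟩
      · rintro ⟨a, b, h⟩; omega
    · rintro ⟨u, v⟩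
      have e : 1 * (u - 2 * v).natAbs ^ 2 + 2 * (- u - v).natAbs ^ 2 =
          3 * (1 * u.natAbs ^ 2 + 2 * v.natAbs ^ 2) := by
        zify
        simp only [sq_abs]; ring
      simp only [f]
      rw [e, Nat.mul_div_cancel_left _ (by norm_num),
        negpow_eq (show (- u - v).natAbs % 2 = (u.natAbs + v.natAbs) % 2 by omega), pow_add]
  have a3 : HasSum (fun p : ℤ × ℤ => if 3 ∣ p.1 ∧ 3 ∣ p.2 then f p else 0)
      (th 1 3 * th (-1) 6) := by
    refine h_ite hZ (fun q => (3 * q.1, 3 * q.2)) ?_ _ ?_ ?_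
    · rintro ⟨a, b⟩ ⟨c, d⟩ h
      simp only [Prod.mk.injEq] at h ⊢
      omega
    · rintro ⟨x, y⟩
      simp only [Set.mem_range, Prod.exists, Prod.mk.injEq]
      constructor
      · intro h; exact ⟨x / 3, y / 3, by omega⟩
      · rintro ⟨a, b, h⟩; omega
    · rintro ⟨u, v⟩
      have e : 1 * (3 * u).natAbs ^ 2 + 2 * (3 * v).natAbs ^ 2 =
          3 * (3 * u.natAbs ^ 2 + 6 * v.natAbs ^ 2) := by
        zify
        simp only [sq_abs]; ring
      simp only [f]
      rw [e, Nat.mul_div_cancel_left _ (by norm_num),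
        negpow_eq (show (3 * v).natAbs % 2 = (v.natAbs) % 2 by omega), one_pow, one_mul]
  have key := (h1.add a3).unique (a₂ := th (-1) 1 * th (-1) 2 + th (-1) 1 * th (-1) 2) (by
    refine (a1.add a2).congr_fun ?_
    rintro ⟨x, y⟩
    simp only [Function.comp, U_mono, one_pow, one_mul, f]
    have hd : (3 ∣ x.natAbs ^ 2 + 2 * y.natAbs ^ 2) ↔ (3 ∣ x - y ∨ 3 ∣ x + y) := by
      rw [← Int.natCast_dvd_natCast]
      push_cast
      rw [sq_abs, sq_abs, ← Int.prime_three.dvd_mul,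
        show x ^ 2 + 2 * y ^ 2 = (x - y) * (x + y) + 3 * y ^ 2 by ring]
      constructor
      · intro h; exact (Int.dvd_add_left (Dvd.intro _ rfl)).1 h
      · intro h; exact (Int.dvd_add_left (Dvd.intro _ rfl)).2 h
    by_cases c1 : 3 ∣ x - y <;> by_cases c2 : 3 ∣ x + y
    · rw [if_pos (hd.2 (Or.inl c1)), if_pos c1, if_pos c2, if_pos (by omega)]
    · rw [if_pos (hd.2 (Or.inl c1)), if_pos c1, if_neg c2, if_neg (by omega)]
    · rw [if_pos (hd.2 (Or.inr c2)), if_neg c1, if_pos c2, if_neg (by omega)]; simp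
    · rw [if_neg (fun h => (hd.1 h).elim c1 c2), if_neg c1, if_neg c2, if_neg (by omega)])
  rw [key]; ring

/-- support in a residue class mod 3 -/
def Sp (r : ℕ) (f : R⟦X⟧) : Prop := ∀ n, n % 3 ≠ r % 3 → coeff n f = 0

lemma Sp.mul {r s : ℕ} {f g : R⟦X⟧} (hf : Sp r f) (hg : Sp s g) : Sp (r + s) (f * g) := by
  intro n hn
  rw [coeff_mul]
  apply Finset.sum_eq_zero
  rintro ⟨a, b⟩ h
  rw [Finset.HasAntidiagonal.mem_antidiagonal] at h
  dsimp only at h ⊢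
  by_cases ha : a % 3 = r % 3
  · rw [hg b (by omega), mul_zero]
  · rw [hf a ha, zero_mul]

lemma Sp.U0 {r : ℕ} {f : R⟦X⟧} (hf : Sp r f) (hr : r % 3 ≠ 0) : U f = 0 := by
  ext n
  rw [coeff_U, hf _ (by omega)]; simp

lemma Sp_hasSum {ι : Type*} {g : ι → R⟦X⟧} {F : R⟦X⟧} (h : HasSum g F) (r : ℕ)
    (hg : ∀ i, Sp r (g i)) : Sp r F := by
  intro n hn
  have h1 := (WithPiTopology.hasSum_iff_hasSum_coeff R).1 h n
  refine h1.unique ?_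
  simp only [hg _ n hn]
  exact hasSum_zero

lemma th_split (s : R) (hs : s ^ 2 = 1) (k : ℕ) (hk : 0 < k) : Sp k (th s k - th s (9 * k)) := by
  have h1 := hth s k hk
  have h2 : HasSum (fun x : ℤ => if 3 ∣ x then tm s k x else 0) (th s (9 * k)) := by
    refine h_ite (hth s (9 * k) (by omega)) (fun x => 3 * x) ?_ _ ?_ ?_
    · intro a b h; simpa using h
    · intro x; constructor
      · rintro ⟨c, rfl⟩; exact ⟨c, rfl⟩
      · rintro ⟨c, rfl⟩; exact ⟨c, rfl⟩
    · intro x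
      simp only [tm, Int.natAbs_mul, Int.reduceAbs]
      congr 1
      · congr 1; ring
      · rw [show 3 * x.natAbs = 2 * x.natAbs + x.natAbs by ring, pow_add, pow_mul, hs]; simp
  refine Sp_hasSum (h1.sub h2) k ?_
  intro x
  split_ifs with h
  · intro n _; simp
  · intro n hn
    rw [sub_zero, tm, coeff_monomial, if_neg]
    rintro rfl
    apply hn
    have : x.natAbs % 3 = 1 ∨ x.natAbs % 3 = 2 := by omega
    rcases this with h | h <;> simp [Nat.mul_mod, Nat.pow_mod, h]

lemma U_h : U (th 1 1 * th (-1) 2 ^ 2) = th (-1) 6 * (th (-1) 1 * th (-1) 2) := by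
  have hb := th_split 1 (by decide) 1 one_pos
  have hS := th_split (-1) (by decide) 2 two_pos
  have hX := U_X
  have ea : th 1 9 = th 1 3 ^ 3 := (th_cube 1 3 (by norm_num)).symm
  have eP : th (-1) 18 = th (-1) 6 ^ 3 := (th_cube (-1) 6 (by norm_num)).symm
  norm_num at hb hS
  set b := th 1 1 - th 1 9 with hbd
  set S := th (-1) 2 - th (-1) 18 with hSd
  have e1 : th 1 1 = th 1 3 ^ 3 + b := by rw [hbd, ea]; ring
  have e2 : th (-1) 2 = th (-1) 6 ^ 3 + S := by rw [hSd, eP]; ring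
  have z1 : U b = 0 := hb.U0 (by norm_num)
  have z2 : U S = 0 := hS.U0 (by norm_num)
  have z3 : U (b * (S * S)) = 0 := (hb.mul (hS.mul hS)).U0 (by norm_num)
  have z4 : U (S * S) = 0 := (hS.mul hS).U0 (by norm_num)
  have hone : U 1 = 1 := by
    ext n; rw [coeff_U, coeff_one, coeff_one]; congr 1; simp
  have k1 : U (th 1 1 * th (-1) 2) = th 1 3 * th (-1) 6 + U (b * S) := by
    rw [e1, e2]
    conv_lhs => rw [show (th 1 3 ^ 3 + b) * (th (-1) 6 ^ 3 + S) =
      (th 1 3 * th (-1) 6) ^ 3 * 1 + th 1 3 ^ 3 * S + th (-1) 6 ^ 3 * b + b * S by ring]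
    simp only [map_add, U_cube_mul, z1, z2, hone]
    ring
  have k2 : U (th 1 1 * th (-1) 2 ^ 2) = th 1 3 * th (-1) 6 ^ 2 + 2 * th (-1) 6 * U (b * S) := by
    rw [e1, e2]
    conv_lhs => rw [show (th 1 3 ^ 3 + b) * (th (-1) 6 ^ 3 + S) ^ 2 =
      (th 1 3 * th (-1) 6 ^ 2) ^ 3 * 1 + (th 1 3 * th (-1) 6) ^ 3 * S
      + (th 1 3 * th (-1) 6) ^ 3 * S  + th 1 3 ^ 3 * (S * S)
       + (th (-1) 6 ^ 2) ^ 3 * b + th (-1) 6 ^ 3 * (b * S) + th (-1) 6 ^ 3 * (b * S)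
       + b * (S * S) by ring]
    simp only [map_add, U_cube_mul, z1, z2, z3, z4, hone]
    ring
  rw [k2]
  rw [k1] at hX
  linear_combination 2 * th (-1) 6 * hX + (th (-1) 6 * (th (-1) 1 * th (-1) 2)
    - th 1 3 * th (-1) 6 ^ 2) * three_zero

lemma coeff_zero_th (s : R) (k : ℕ) (hk : 0 < k) : coeff 0 (th s k) = 1 := by
  have h1 := (WithPiTopology.hasSum_iff_hasSum_coeff R).1 (hth s k hk) 0
  refine h1.unique ?_
  convert hasSum_ite_eq (0 : ℤ) (1 : R) using 1
  funext x
  by_cases h : x = 0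
  · simp [h, tm]
  · rw [if_neg h, tm, coeff_monomial, if_neg]
    have : 0 < x.natAbs := by omega
    positivity

lemma th_ne (s : R) (k : ℕ) (hk : 0 < k) : th s k ≠ 0 := by
  intro h
  have := coeff_zero_th s k hk
  rw [h] at this
  simp at this

lemma final (G : R⟦X⟧) (hG : G * th 1 1 = th (-1) 1) : U (U (U G)) = U G := by
  have h1 : U G * th 1 1 = th (-1) 6 * (th (-1) 1 * th (-1) 2) := by
    rw [← U_h, ← phi_mul, mul_comm, ← U_cube_mul]
    congr 1
    linear_combination th 1 1 ^ 2 * hG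
  have e6 : th (-1) 6 = th (-1) 2 ^ 3 := (th_cube (-1) 2 (by norm_num)).symm
  have hg : U G = th (-1) 1 ^ 3 * th 1 1 := by
    apply mul_right_cancel₀ (th_ne 1 1 one_pos)
    rw [h1, e6]
    linear_combination (-th (-1) 1 * (th (-1) 2 ^ 2 + th 1 1 * th (-1) 1)) * phi_mul
  have h3 : th 1 3 = th 1 1 ^ 3 := (th_cube 1 1 one_pos).symm
  have h3' : th (-1) 3 = th (-1) 1 ^ 3 := (th_cube (-1) 1 one_pos).symm
  rw [hg, U_cube_mul, U_th _ (by decide), h3, mul_comm, U_cube_mul, U_th _ (by decide), h3',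
    mul_comm]

end RB
namespace RB

/-- Gaussian binomials in base `X ^ 2` -/
noncomputable def gb : ℕ → ℕ → R⟦X⟧
  | _, 0 => 1
  | 0, _ + 1 => 0
  | n + 1, k + 1 => gb n k + X ^ (2 * (k + 1)) * gb n (k + 1)

lemma gb_zero (n : ℕ) : gb n 0 = 1 := by cases n <;> simp [gb]

lemma gb_gt (n : ℕ) : ∀ k, n < k → gb n k = 0 := by
  induction n with
  | zero => intro k hk; obtain ⟨k, rfl⟩ := Nat.exists_eq_add_of_lt hk; simp [gb]
  | succ n ih =>
    intro k hk
    obtain ⟨k, rfl⟩ : ∃ j, k = j + 1 := ⟨k - 1, by omega⟩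
    rw [gb, ih k (by omega), ih (k + 1) (by omega)]; simp

lemma gb_const (n : ℕ) : ∀ k, k ≤ n → constantCoeff (gb n k) = 1 := by
  induction n with
  | zero => intro k hk; obtain rfl : k = 0 := by omega
            simp [gb]
  | succ n ih =>
    intro k hk
    cases k with
    | zero => simp [gb]
    | succ k => simp [gb, ih k (by omega)]

lemma gb_adj (n : ℕ) : ∀ a b, a + b = n →
    gb n a * (1 - X ^ (2 * b)) = gb n (a + 1) * (1 - X ^ (2 * (a + 1))) := by
  induction n with
  | zero =>
    intro a b h
    obtain rfl : a = 0 := by omega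
    obtain rfl : b = 0 := by omega
    simp [gb]
  | succ n ih =>
    intro a b h
    cases a with
    | zero =>
      obtain rfl : b = n + 1 := by omega
      have h1 := ih 0 n (by omega)
      rw [gb_zero] at h1 ⊢
      rw [gb, gb_zero]
      simp only [zero_add, mul_one] at h1 ⊢
      linear_combination X ^ 2 * h1
    | succ a =>
      have h1 := ih a b (by omega)
      rw [gb, gb]
      cases b with
      | zero =>
        rw [gb_gt n (a + 1) (by omega), gb_gt n (a + 1 + 1) (by omega)]; simp
      | succ b =>
        have h2 := ih (a + 1) b (by omega)
        linear_combination h1 + X ^ (2 * (a + 1 + 1)) * h2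

lemma gb_prod (y : R⟦X⟧) (n : ℕ) : ∀ z, ∏ k ∈ range n, (y + z * X ^ (2 * k)) =
    ∑ j ∈ range (n + 1), gb n j * X ^ (j * (j - 1)) * z ^ j * y ^ (n - j) := by
  induction n with
  | zero => intro z; simp [gb]
  | succ n ih =>
    intro z
    rw [prod_range_succ']
    have e : ∏ k ∈ range n, (y + z * X ^ (2 * (k + 1))) =
        ∏ k ∈ range n, (y + (z * X ^ 2) * X ^ (2 * k)) := by
      apply prod_congr rfl; intros; ring
    rw [e, ih (z * X ^ 2), sum_range_succ' _ (n + 1)]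
    have e2 : ∀ j ∈ range (n + 1),
        gb (n + 1) (j + 1) * X ^ ((j + 1) * (j + 1 - 1)) * z ^ (j + 1) * y ^ (n + 1 - (j + 1)) =
        z * (gb n j * X ^ (j * (j - 1)) * (z * X ^ 2) ^ j * y ^ (n - j)) +
        gb n (j + 1) * X ^ ((j + 1) * (j + 1 - 1)) * (z * X ^ 2) ^ (j + 1) *
          y ^ (n + 1 - (j + 1)) := by
      intro j _
      rw [gb]
      have : (X : R⟦X⟧) ^ ((j + 1) * (j + 1 - 1)) = X ^ (j * (j - 1)) * X ^ (2 * j) := by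
        rw [← pow_add]; congr 1
        cases j with
        | zero => simp
        | succ j => simp; ring
      rw [this, show n + 1 - (j + 1) = n - j by omega]
      ring
    rw [sum_congr rfl e2, sum_add_distrib, ← mul_sum]
    have e3 := sum_range_succ' (fun j => gb n j * X ^ (j * (j - 1)) * (z * X ^ 2) ^ j *
      y ^ (n + 1 - j)) (n + 1)
    have e4 : ∑ j ∈ range (n + 1 + 1), gb n j * X ^ (j * (j - 1)) * (z * X ^ 2) ^ j *
      y ^ (n + 1 - j) = y * ∑ j ∈ range (n + 1), gb n j * X ^ (j * (j - 1)) * (z * X ^ 2) ^ j *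
      y ^ (n - j) := by
      rw [sum_range_succ, gb_gt n (n + 1) (by omega), mul_sum]
      simp only [zero_mul, add_zero]
      apply sum_congr rfl
      intro j hj
      rw [mem_range] at hj
      rw [show n + 1 - j = (n - j) + 1 by omega]; ring
    rw [e4] at e3
    simp only [gb_zero] at e3 ⊢
    simp only [zero_mul, pow_zero, mul_one, one_mul, mul_zero] at e3 ⊢
    linear_combination e3

/-- finite products -/
noncomputable def A (s : R) (n : ℕ) : R⟦X⟧ := ∏ k ∈ range n, (1 + C s * X ^ (2 * k + 1))

lemma gb_center (s : R) (hs : s ^ 2 = 1) (n : ℕ) :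
    ∑ i ∈ range (2 * n + 1), gb (2 * n) i * tm s 1 ((i : ℤ) - n) = A s n ^ 2 := by
  have hC : (C s : R⟦X⟧) ^ 2 = 1 := by rw [← map_pow, hs, map_one]
  have h := gb_prod (X ^ (2 * n - 1)) (2 * n) (C s)
  have e1 : ∏ k ∈ range (2 * n), ((X : R⟦X⟧) ^ (2 * n - 1) + C s * X ^ (2 * k)) =
      C s ^ n * X ^ (n * (n - 1)) * X ^ ((2 * n - 1) * n) * A s n ^ 2 := by
    rw [two_mul n, prod_range_add, ← two_mul]
    have f1 : ∏ k ∈ range n, ((X : R⟦X⟧) ^ (2 * n - 1) + C s * X ^ (2 * k)) =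
        C s ^ n * X ^ (n * (n - 1)) * A s n := by
      have : ∀ k ∈ range n, ((X : R⟦X⟧) ^ (2 * n - 1) + C s * X ^ (2 * k)) =
          C s * X ^ (2 * k) * (1 + C s * X ^ (2 * (n - 1 - k) + 1)) := by
        intro k hk
        rw [mem_range] at hk
        rw [show 2 * n - 1 = 2 * k + (2 * (n - 1 - k) + 1) by omega, pow_add X (2 * k)]
        linear_combination (- X ^ (2 * k) * X ^ (2 * (n - 1 - k) + 1)) * hC
      rw [prod_congr rfl this, prod_mul_distrib, prod_mul_distrib, prod_const, card_range,
        prod_range_reflect (fun k => (1 + C s * X ^ (2 * k + 1) : R⟦X⟧)) n, A,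
        prod_pow_eq_pow_sum, ← mul_sum, mul_comm 2, Finset.sum_range_id_mul_two]
    have f2 : ∏ k ∈ range n, ((X : R⟦X⟧) ^ (2 * n - 1) + C s * X ^ (2 * (n + k))) =
        X ^ ((2 * n - 1) * n) * A s n := by
      have : ∀ k ∈ range n, ((X : R⟦X⟧) ^ (2 * n - 1) + C s * X ^ (2 * (n + k))) =
          X ^ (2 * n - 1) * (1 + C s * X ^ (2 * k + 1)) := by
        intro k hk
        rw [mem_range] at hk
        rw [show 2 * (n + k) = (2 * n - 1) + (2 * k + 1) by omega, pow_add X (2 * n - 1)]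
        ring
      rw [prod_congr rfl this, prod_mul_distrib, prod_const, card_range, A, ← pow_mul]
    rw [f1, f2]; ring
  have e2 : ∀ i ∈ range (2 * n + 1), gb (2 * n) i * X ^ (i * (i - 1)) * C s ^ i *
      (X ^ (2 * n - 1)) ^ (2 * n - i) =
      C s ^ n * X ^ (n * (n - 1)) * X ^ ((2 * n - 1) * n) *
        (gb (2 * n) i * tm s 1 ((i : ℤ) - n)) := by
    intro i hi
    rw [mem_range] at hi
    rw [tm, mono_eq, map_pow]
    have g1 : (C s : R⟦X⟧) ^ i = C s ^ n * C s ^ ((i : ℤ) - n).natAbs := by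
      rw [← pow_add]
      rcases le_total n i with h | h
      · congr 1; omega
      · rw [show n + ((i : ℤ) - n).natAbs = i + 2 * (n - i) by omega, pow_add, pow_mul, hC]; simp
    have g2 : (X : R⟦X⟧) ^ (i * (i - 1)) * (X ^ (2 * n - 1)) ^ (2 * n - i) =
        X ^ (n * (n - 1)) * X ^ ((2 * n - 1) * n) * X ^ (1 * ((i : ℤ) - n).natAbs ^ 2) := by
      rw [← pow_mul, ← pow_add, ← pow_add, ← pow_add]
      congr 1
      rcases Nat.eq_zero_or_pos n with rfl | hn
      · obtain rfl : i = 0 := by omega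
        simp
      · have q1 : ((n - 1 : ℕ) : ℤ) = n - 1 := by omega
        have q2 : ((2 * n - 1 : ℕ) : ℤ) = 2 * n - 1 := by omega
        have q3 : ((2 * n - i : ℕ) : ℤ) = 2 * n - i := by omega
        have q4 : ((i * (i - 1) : ℕ) : ℤ) = i * (i - 1) := by
          cases i <;> simp
        zify [q1, q2, q3] at q4 ⊢
        rw [q4, sq_abs]
        ring
    rw [g1]
    linear_combination (gb (2 * n) i * C s ^ n * C s ^ ((i : ℤ) - n).natAbs) * g2
  rw [e1, sum_congr rfl e2, ← mul_sum] at h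
  have hne : (C s ^ n * X ^ (n * (n - 1)) * X ^ ((2 * n - 1) * n) : R⟦X⟧) ≠ 0 := by
    have : (C s : R⟦X⟧) ≠ 0 := by
      intro h0; rw [h0] at hC; simp at hC
    have hX : (X : R⟦X⟧) ≠ 0 := X_ne_zero
    positivity
  exact (mul_left_cancel₀ hne h).symm

lemma gb_step (n a : ℕ) (m : ℕ) (h1 : m ≤ 2 * (a + 1)) (h2 : m + 2 * a ≤ 2 * n) :
    (X : R⟦X⟧) ^ m ∣ gb n (a + 1) - gb n a := by
  have h := gb_adj n a (n - a) (by omega)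
  have : gb n (a + 1) - gb n a =
      gb n (a + 1) * X ^ (2 * (a + 1)) - gb n a * X ^ (2 * (n - a)) := by
    linear_combination (-1) * h
  rw [this]
  exact dvd_sub (Dvd.dvd.mul_left (pow_dvd_pow _ h1) _)
    (Dvd.dvd.mul_left (pow_dvd_pow _ (by omega)) _)

lemma gb_mid (n d : ℕ) (hd : d ≤ n) :
    (X : R⟦X⟧) ^ (2 * (n - d)) ∣ gb (2 * n) (n + d) - gb (2 * n) n ∧
    (X : R⟦X⟧) ^ (2 * (n - d)) ∣ gb (2 * n) (n - d) - gb (2 * n) n := by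
  induction d with
  | zero => simp
  | succ d ih =>
    obtain ⟨i1, i2⟩ := ih (by omega)
    have hle : (X : R⟦X⟧) ^ (2 * (n - (d + 1))) ∣ X ^ (2 * (n - d)) := pow_dvd_pow _ (by omega)
    constructor
    · have := gb_step (2 * n) (n + d) (2 * (n - (d + 1))) (by omega) (by omega)
      have := dvd_add this (hle.trans i1)
      rw [← add_assoc n]
      convert this using 1; ring
    · have := gb_step (2 * n) (n - (d + 1)) (2 * (n - (d + 1))) (by omega) (by omega)
      rw [show n - (d + 1) + 1 = n - d by omega] at this
      have := dvd_sub (hle.trans i2) this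
      convert this using 1; ring

/-- partial theta sums -/
noncomputable def T (s : R) (n : ℕ) : R⟦X⟧ := ∑ i ∈ range (2 * n + 1), tm s 1 ((i : ℤ) - n)

lemma T_congr (s : R) (hs : s ^ 2 = 1) (n : ℕ) :
    (X : R⟦X⟧) ^ n ∣ A s n ^ 2 - gb (2 * n) n * T s n := by
  rw [← gb_center s hs, T, mul_sum, ← sum_sub_distrib]
  apply dvd_sum
  intro i hi
  rw [mem_range] at hi
  rw [← sub_mul]
  set d := ((i : ℤ) - n).natAbs with hd
  have h1 : (X : R⟦X⟧) ^ (2 * (n - d)) ∣ gb (2 * n) i - gb (2 * n) n := by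
    obtain ⟨i1, i2⟩ := gb_mid n d (by omega)
    rcases le_total n i with h | h
    · rwa [show n + d = i by omega] at i1
    · have e : n - d = i := by omega
      rw [e] at i2 ⊢
      exact i2
  have h2 : (X : R⟦X⟧) ^ (d ^ 2) ∣ tm s 1 ((i : ℤ) - n) := by
    rw [tm, mono_eq, one_mul]
    exact Dvd.intro_left _ rfl
  refine (pow_dvd_pow _ ?_).trans (by rw [pow_add]; exact mul_dvd_mul h1 h2)
  have : d ≤ n := by omega
  rcases Nat.eq_zero_or_pos d with h0 | h0
  · rw [h0]; omega
  · have : d ≤ d ^ 2 := by nlinarith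
    omega

lemma T_A (n : ℕ) : (X : R⟦X⟧) ^ n ∣ T 1 n * A (-1) n ^ 2 - T (-1) n * A 1 n ^ 2 := by
  have h1 := T_congr 1 (by decide) n
  have h2 := T_congr (-1) (by decide) n
  have h3 : (X : R⟦X⟧) ^ n ∣ gb (2 * n) n *
      (T 1 n * A (-1) n ^ 2 - T (-1) n * A 1 n ^ 2) := by
    have := dvd_sub (Dvd.dvd.mul_left h2 (A 1 n ^ 2)) (Dvd.dvd.mul_left h1 (A (-1) n ^ 2))
    convert this using 1; ring
  have hu : IsUnit (gb (2 * n) n) := by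
    rw [isUnit_iff_constantCoeff, gb_const _ _ (by omega)]
    exact isUnit_one
  exact hu.dvd_mul_left.1 h3

lemma T_lim (s : R) : Tendsto (T s) atTop (nhds (th s 1)) := by
  have h := hth s 1 one_pos
  have h2 : Tendsto (fun n : ℕ => Finset.Icc (-(n : ℤ)) n) atTop atTop := by
    apply tendsto_atTop_finset_of_monotone
    · intro a b h
      apply Finset.Icc_subset_Icc <;> omega
    · intro x
      exact ⟨x.natAbs, by rw [Finset.mem_Icc]; omega⟩
  have h3 := h.comp h2
  refine h3.congr ?_
  intro n
  rw [T]
  symm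
  apply Finset.sum_bij (fun (i : ℕ) _ => (i : ℤ) - n)
  · intro i hi; rw [mem_range] at hi; rw [Finset.mem_Icc]; omega
  · intro a _ b _ h; omega
  · intro x hx
    rw [Finset.mem_Icc] at hx
    exact ⟨(x + n).toNat, by rw [mem_range]; omega, by omega⟩
  · intros; rfl

lemma gauss (N D : R⟦X⟧) (hN : Tendsto (A 1) atTop (nhds N)) (hD : Tendsto (A (-1)) atTop (nhds D)) :
    th 1 1 * D ^ 2 = th (-1) 1 * N ^ 2 := by
  have h1 := ((T_lim 1).mul (hD.pow 2)).sub ((T_lim (-1)).mul (hN.pow 2))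
  have h2 : Tendsto (fun n => T 1 n * A (-1) n ^ 2 - T (-1) n * A 1 n ^ 2) atTop (nhds 0) := by
    rw [WithPiTopology.tendsto_iff_coeff_tendsto]
    intro d
    apply tendsto_nhds_of_eventually_eq
    filter_upwards [eventually_gt_atTop d] with n hn
    rw [X_pow_dvd_iff.1 (T_A n) d hn]; simp
  exact sub_eq_zero.1 (tendsto_nhds_unique h1 h2)

end RB
namespace RB

def pp (i : ℕ) : Prop := ¬ 2 ∣ i ∧ ¬ 3 ∣ i
instance : DecidablePred pp := fun i => by unfold pp; infer_instance

lemma mult_aux (f : ℕ → R⟦X⟧) (h : ∀ k, (X : R⟦X⟧) ^ (2 * k + 1) ∣ f k) :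
    Multipliable (fun k => 1 + f k) := by
  apply WithPiTopology.multipliable_one_add_of_tendsto_order_atTop_nhds_top
  refine ENat.tendsto_nhds_top_iff_natCast_lt.mpr (fun n ↦ Filter.eventually_atTop.mpr ⟨n, ?_⟩)
  intro m hm
  have : ((2 * m + 1 : ℕ) : ℕ∞) ≤ (f m).order := by
    apply le_order
    intro i hi
    exact X_pow_dvd_iff.1 (h m) i (by exact_mod_cast hi)
  refine lt_of_lt_of_le ?_ this
  norm_cast; omega

noncomputable def NN (s : R) : R⟦X⟧ := ∏' k : ℕ, (1 + C s * X ^ (2 * k + 1))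

lemma hNN (s : R) : HasProd (fun k : ℕ => (1 + C s * X ^ (2 * k + 1) : R⟦X⟧)) (NN s) :=
  (mult_aux _ (fun _ => Dvd.intro_left _ rfl)).hasProd

lemma A_lim (s : R) : Tendsto (A s) atTop (nhds (NN s)) := (hNN s).tendsto_prod_nat

noncomputable def EE (s : R) : R⟦X⟧ :=
  ∏' k : ℕ, (1 + if ¬ 3 ∣ 2 * k + 1 then C s * X ^ (2 * k + 1) else 0)

lemma hEE (s : R) : HasProd (fun k : ℕ =>
    (1 + (if ¬ 3 ∣ 2 * k + 1 then C s * X ^ (2 * k + 1) else 0) : R⟦X⟧)) (EE s) := by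
  refine (mult_aux _ ?_).hasProd
  intro k
  split_ifs
  · exact dvd_zero _
  · exact Dvd.intro_left _ rfl

lemma NN_ne (s : R) : NN s ≠ 0 := by
  intro h
  have h1 := (hNN s).map (constantCoeff : R⟦X⟧ →+* R) (WithPiTopology.continuous_constantCoeff R)
  have h2 : HasProd (fun _ : ℕ => (1 : R)) 1 := hasProd_one
  have e : (⇑(constantCoeff : R⟦X⟧ →+* R) ∘ fun k : ℕ => (1 + C s * X ^ (2 * k + 1) : R⟦X⟧)) =
    fun _ => 1 := by funext k; simp
  rw [e] at h1
  have := h1.unique h2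
  rw [h] at this
  simp at this

lemma EE_NN (s : R) : EE s * NN s ^ 2 = 1 := by
  have h3 : HasProd (fun k : ℕ =>
      (1 + (if 3 ∣ 2 * k + 1 then C s * X ^ (2 * k + 1) else 0) : R⟦X⟧)) (NN s ^ 3) := by
    have hinj : Function.Injective (fun k : ℕ => 3 * k + 1) := fun a b h => by
      simp only at h; omega
    rw [← hinj.hasProd_iff]
    · have hc := (hNN s).pow 3
      refine hc.congr_fun ?_
      intro k
      simp only [Function.comp]
      rw [if_pos ⟨2 * k + 1, by ring⟩]
      have hs : (C s : R⟦X⟧) ^ 3 = C s := by rw [← map_pow, cube3]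
      rw [show 2 * (3 * k + 1) + 1 = 3 * (2 * k + 1) by ring, pow_mul']
      linear_combination (-((X : R⟦X⟧) ^ (2 * k + 1)) ^ 3) * hs - (C s * X ^ (2 * k + 1) + (C s * X ^ (2 * k + 1)) ^ 2) * three_zero
    · intro k hk
      rw [if_neg, add_zero]
      intro h
      apply hk
      exact ⟨k / 3, by simp only; omega⟩
  have h4 := (hEE s).mul h3
  have h5 : EE s * NN s ^ 3 = NN s := by
    refine h4.unique ((hNN s).congr_fun ?_)
    intro k
    by_cases h : 3 ∣ 2 * k + 1 <;> simp [h]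
  apply mul_right_cancel₀ (NN_ne s)
  linear_combination h5

noncomputable def LL : R⟦X⟧ := PowerSeries.mk fun n => (regularCount 2 3 n : R)
noncomputable def DD : R⟦X⟧ := PowerSeries.mk fun n => (regularDistinctCount 2 3 n : R)

lemma inj2 : Function.Injective (fun k : ℕ => 2 * k) := fun a b h => by
  simp only at h; omega

lemma hLL : HasProd (fun k : ℕ => if ¬ 3 ∣ 2 * k + 1 then ∑' j : ℕ, (X : R⟦X⟧) ^ ((2 * k + 1) * j)
    else 1) LL := by
  have h := Nat.Partition.hasProd_powerSeriesMk_card_restricted R pp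
  have e : (PowerSeries.mk fun n => (#(Nat.Partition.restricted n pp) : R)) = LL := by
    ext n
    rw [LL, coeff_mk, coeff_mk, regularCount, Fintype.card_subtype]
    rfl
  rw [e, ← inj2.hasProd_iff] at h
  · refine h.congr_fun ?_
    intro k
    simp only [Function.comp, pp]
    congr 1
    simp
  · intro k hk
    rw [if_neg]
    intro hp
    apply hk
    exact ⟨k / 2, by unfold pp at hp; simp only; omega⟩

lemma hDD : HasProd (fun k : ℕ => 1 + if ¬ 3 ∣ 2 * k + 1 then (C (1 : R) * X ^ (2 * k + 1) : R⟦X⟧)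
    else 0) DD := by
  have h := Nat.Partition.hasProd_genFun (fun i c => if c = 1 ∧ pp i then (1 : R) else 0)
  have e : Nat.Partition.genFun (fun i c => if c = 1 ∧ pp i then (1 : R) else 0) = DD := by
    ext n
    rw [DD, Nat.Partition.coeff_genFun, coeff_mk, regularDistinctCount, Fintype.card_subtype,
      Finset.card_filter, Nat.cast_sum]
    apply Finset.sum_congr rfl
    intro p _
    rw [Finsupp.prod, Multiset.toFinsupp_support]
    by_cases hp : p.parts.Nodup ∧ ∀ i ∈ p.parts, ¬ 2 ∣ i ∧ ¬ 3 ∣ i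
    · rw [if_pos hp, Nat.cast_one]
      apply Finset.prod_eq_one
      intro i hi
      rw [Multiset.mem_toFinset] at hi
      rw [if_pos]
      refine ⟨?_, hp.2 i hi⟩
      rw [Multiset.toFinsupp_apply]
      exact Multiset.count_eq_one_of_mem hp.1 hi
    · rw [if_neg hp, Nat.cast_zero, Finset.prod_eq_zero_iff]
      by_contra hc
      push Not at hc
      have hc2 : ∀ i ∈ p.parts, Multiset.count i p.parts = 1 ∧ pp i := by
        intro i hi
        have := hc i (Multiset.mem_toFinset.2 hi)
        by_contra hn
        apply this
        rw [if_neg]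
        rwa [Multiset.toFinsupp_apply]
      apply hp
      refine ⟨?_, fun i hi => (hc2 i hi).2⟩
      rw [Multiset.nodup_iff_count_eq_one]
      exact fun i hi => (hc2 i hi).1
  have e2 : ∀ i, (1 + ∑' j, (if j + 1 = 1 ∧ pp (i + 1) then (1 : R) else 0) •
      (X : R⟦X⟧) ^ ((i + 1) * (j + 1))) = 1 + if pp (i + 1) then X ^ (i + 1) else 0 := by
    intro i
    congr 1
    rw [tsum_eq_single 0]
    · by_cases h : pp (i + 1) <;> simp [h]
    · intro j hj
      rw [if_neg (by omega), zero_smul]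
  simp only [e2] at h
  rw [e, ← inj2.hasProd_iff] at h
  · refine h.congr_fun ?_
    intro k
    simp only [Function.comp, pp, map_one, one_mul]
    congr 2
    simp
  · intro k hk
    rw [if_neg, add_zero]
    intro hp
    apply hk
    exact ⟨k / 2, by unfold pp at hp; simp only; omega⟩

lemma LL_EE : LL * EE (-1) = 1 := by
  refine (hLL.mul (hEE (-1))).unique ?_
  refine (hasProd_one (α := R⟦X⟧) (β := ℕ)).congr_fun ?_
  intro k
  by_cases h : 3 ∣ 2 * k + 1
  · simp [h]
  · simp only [h, not_false_iff, if_true, pow_mul]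
    have := WithPiTopology.tsum_pow_mul_one_sub_of_constantCoeff_eq_zero
      (f := (X : R⟦X⟧) ^ (2 * k + 1)) (by simp)
    simpa [sub_eq_add_neg] using this

lemma G_eq : (LL * DD) * th 1 1 = th (-1) 1 := by
  have h1 : DD = EE 1 := hDD.unique (hEE 1)
  have h2 := EE_NN 1
  have h3 := EE_NN (-1)
  have h4 := LL_EE
  have h5 := gauss _ _ (A_lim 1) (A_lim (-1))
  have h6 : LL = NN (-1) ^ 2 := by
    linear_combination NN (-1) ^ 2 * h4 - LL * h3
  rw [h1, h6]
  linear_combination EE 1 * h5 + th (-1) 1 * h2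

lemma coeff_G (n : ℕ) : coeff n (LL * DD) = (Rbar 2 3 n : R) := by
  rw [coeff_mul, Rbar, Nat.cast_sum]
  apply Finset.sum_congr rfl
  intro p _
  simp [LL, DD]

end RB

theorem Rbar_two_three_27n_congr_3n (n : ℕ) :
    Rbar 2 3 (27 * n) ≡ Rbar 2 3 (3 * n) [MOD 3] := by
  have h := congrArg (PowerSeries.coeff n) (RB.final _ RB.G_eq)
  simp only [RB.coeff_U, RB.coeff_G] at h
  rw [show 3 * (3 * (3 * n)) = 27 * n by ring] at h
  exact (ZMod.natCast_eq_natCast_iff _ _ _).1 h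
end

section
/- For all integers β ≥ 1 and n ≥ 0, the number of (2,3)-regular overpartitions satisfies R̄_{2,3}(3^β(3n+2)) ≡ 0 (mod 6). -/
section helpers
open PowerSeries Finset

abbrev F3X := PowerSeries (ZMod 3)

noncomputable def U3 (f : F3X) : F3X := PowerSeries.mk fun n => coeff (3 * n) f

lemma three_ne : (3:ℕ) ≠ 0 := by norm_num

lemma three_eq_zero : (3 : F3X) = 0 := by
  have h : (3 : ZMod 3) = 0 := by decide
  have := congrArg (C (R := ZMod 3)) h
  rwa [map_ofNat, map_zero] at this

lemma frob_eq (f : F3X) : f ^ 3 = expand 3 three_ne f := by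
  ext n
  -- truncation
  set g : Polynomial (ZMod 3) := trunc (n+1) f with hg
  have h1 : ∃ h : F3X, f = (g : F3X) + X ^ (n+1) * h := by
    have : (X : F3X) ^ (n+1) ∣ f - g := by
      rw [X_pow_dvd_iff]
      intro m hm
      simp [hg, coeff_trunc, hm]
    obtain ⟨h, hh⟩ := this
    exact ⟨h, by rw [← hh]; ring⟩
  obtain ⟨h, hh⟩ := h1
  have : Fact (Nat.Prime 3) := ⟨Nat.prime_three⟩
  have e1 : f ^ 3 = (g : F3X)^3 + X^(n+1) * (X^(2*(n+1)) * h^3) := by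
    rw [hh]; linear_combination ((g:F3X)^2 * (X^(n+1)*h) + (g:F3X) * (X^(n+1)*h)^2) * three_eq_zero
  have e2 : expand 3 three_ne f = expand 3 three_ne (g : F3X) + X^(n+1) * (X^(2*(n+1)) * expand 3 three_ne h) := by
    rw [hh, map_add, map_mul, map_pow, expand_X]; ring
  have e3 : (g : F3X)^3 = expand 3 three_ne (g : F3X) := by
    rw [← Polynomial.coe_pow, ← ZMod.expand_card g]
    ext m
    rw [Polynomial.coeff_coe, Polynomial.coeff_expand (by norm_num), coeff_expand]
    simp [Polynomial.coeff_coe]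
  rw [e1, e2, e3, map_add, map_add]
  simp only [coeff_X_pow_mul']
  simp

lemma U3_mul_cube (f g : F3X) : U3 (f * g ^ 3) = U3 f * g := by
  rw [frob_eq]
  ext n
  simp only [U3, coeff_mk, coeff_mul]
  symm
  apply Finset.sum_of_injOn (fun x => (3 * x.1, 3 * x.2))
  · intro a _ b _ h
    simp at h; ext <;> omega
  · intro a h; simp at h ⊢; omega
  · intro a ha hna
    rw [coeff_expand_of_not_dvd, mul_zero]
    rintro ⟨c, hc⟩
    simp at ha hna
    exact hna (n-c) c (by omega) (by ext <;> simp <;> omega)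
  · intro a ha
    simp [coeff_expand_mul]

lemma U3_add (f g : F3X) : U3 (f + g) = U3 f + U3 g := by ext; simp [U3]
lemma U3_neg (f : F3X) : U3 (-f) = -U3 f := by ext; simp [U3]

lemma U3_sq (f : F3X) (hf : ∀ n, n % 3 = 2 → coeff n f = 0) : U3 (f ^ 2) = U3 f ^ 2 := by
  ext n
  simp only [U3, sq, coeff_mk, coeff_mul]
  symm
  apply Finset.sum_of_injOn (fun x => (3 * x.1, 3 * x.2))
  · intro a _ b _ h
    simp at h; ext <;> omega
  · intro a h; simp at h ⊢; omega
  · intro a ha hna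
    simp at ha hna
    by_cases h2 : a.1 % 3 = 2
    · simp [hf _ h2]
    by_cases h3 : a.2 % 3 = 2
    · simp [hf _ h3]
    exact absurd (by ext <;> simp <;> omega) (hna (a.1/3) (a.2/3) (by omega))
  · intro a ha
    rfl

/-- integer square roots -/
noncomputable def Sq (n : ℕ) : Finset ℤ := (Finset.Icc (-(n:ℤ)) n).filter (fun x => x ^ 2 = n)

lemma mem_Sq (n : ℕ) (x : ℤ) : x ∈ Sq n ↔ x ^ 2 = n := by
  simp only [Sq, mem_filter, mem_Icc, and_iff_right_iff_imp]
  intro h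
  constructor <;> nlinarith [sq_nonneg (x+1), sq_nonneg (x-1), sq_nonneg x, Int.natCast_nonneg n, Int.le_self_sq x, Int.le_self_sq (-x)]

noncomputable def Bs : F3X := PowerSeries.mk fun n => ((Sq n).card : ZMod 3)
noncomputable def Cs : F3X := evalNegHom Bs

lemma coeff_Bs (n : ℕ) : coeff n Bs = ((Sq n).card : ZMod 3) := by simp [Bs]
lemma coeff_Cs (n : ℕ) : coeff n Cs = (-1)^n * ((Sq n).card : ZMod 3) := by
  simp [Cs, evalNegHom, coeff_rescale, Bs]

lemma U3_Bs : U3 Bs = Bs ^ 3 := by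
  rw [frob_eq]
  ext n
  rw [coeff_expand]
  simp only [U3, coeff_mk, coeff_Bs]
  split_ifs with h
  · obtain ⟨m, rfl⟩ := h
    rw [Nat.mul_div_cancel_left _ (by norm_num)]
    congr 1
    symm
    apply Finset.card_bij (fun x _ => 3 * x)
    · intro a ha; rw [mem_Sq] at *; push_cast; nlinarith
    · intro a _ b _ h; simpa using h
    · intro b hb
      rw [mem_Sq] at hb
      have : (3:ℤ) ∣ b := Int.Prime.dvd_pow' (n := b) (k := 2) (p := 3) Nat.prime_three (by
        rw [hb]; push_cast; exact ⟨3 * m, by ring⟩)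
      obtain ⟨c, rfl⟩ := this
      refine ⟨c, ?_, rfl⟩
      rw [mem_Sq]; push_cast at hb; nlinarith
  · have : Sq (3 * n) = ∅ := by
      rw [Finset.eq_empty_iff_forall_notMem]
      intro b hb
      rw [mem_Sq] at hb
      have : (3:ℤ) ∣ b := Int.Prime.dvd_pow' (n := b) (k := 2) (p := 3) Nat.prime_three (by
        rw [hb]; push_cast; exact ⟨n, by ring⟩)
      obtain ⟨c, rfl⟩ := this
      apply h
      have : (n:ℤ) = 3 * c^2 := by push_cast at hb; nlinarith
      have h3 : (3:ℤ) ∣ n := ⟨_, this⟩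
      exact_mod_cast h3
    simp [this]

lemma Bs_two (n : ℕ) (hn : n % 3 = 2) : coeff n Bs = 0 := by
  have : Sq n = ∅ := by
    rw [Finset.eq_empty_iff_forall_notMem]
    intro b hb
    rw [mem_Sq] at hb
    have h2 : (n:ℤ) % 3 = 2 := by omega
    rw [← hb, sq, Int.mul_emod] at h2
    have : b % 3 = 0 ∨ b % 3 = 1 ∨ b % 3 = 2 := by omega
    rcases this with h | h | h <;> simp [h] at h2
  simp [coeff_Bs, this]

/-- representations by x^2+3y^2 -/
noncomputable def Tr (m : ℕ) : Finset (ℤ × ℤ) :=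
  ((Finset.Icc (-(m:ℤ)) m) ×ˢ (Finset.Icc (-(m:ℤ)) m)).filter (fun p => p.1 ^ 2 + 3 * p.2 ^ 2 = m)

lemma mem_Tr (m : ℕ) (p : ℤ × ℤ) : p ∈ Tr m ↔ p.1 ^ 2 + 3 * p.2 ^ 2 = m := by
  simp only [Tr, mem_filter, mem_product, mem_Icc, and_iff_right_iff_imp]
  intro h
  refine ⟨⟨?_, ?_⟩, ?_, ?_⟩ <;> nlinarith [sq_nonneg p.1, sq_nonneg p.2, Int.le_self_sq p.1, Int.le_self_sq (-p.1), Int.le_self_sq p.2, Int.le_self_sq (-p.2)]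

lemma coeff_Bs4 (m : ℕ) : coeff m (Bs * Bs ^ 3) = ((Tr m).card : ZMod 3) := by
  rw [frob_eq, coeff_mul]
  rw [Finset.card_eq_sum_card_fiberwise (f := fun p : ℤ × ℤ => ((p.1^2).toNat, (3 * p.2^2).toNat)) (t := HasAntidiagonal.antidiagonal m)]
  · push_cast
    apply Finset.sum_congr rfl
    rintro ⟨i, j⟩ hij
    simp only [HasAntidiagonal.mem_antidiagonal] at hij
    simp only [coeff_expand, coeff_Bs]
    split_ifs with h
    · obtain ⟨k, rfl⟩ := h
      rw [Nat.mul_div_cancel_left _ (by norm_num), ← Nat.cast_mul, ← Finset.card_product]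
      congr 2
      ext ⟨x, y⟩
      simp only [mem_product, mem_Sq, mem_filter, mem_Tr, Prod.mk.injEq]
      have := sq_nonneg x
      have := sq_nonneg y
      omega
    · rw [mul_zero]
      symm
      rw [Finset.filter_false_of_mem]; · simp
      rintro ⟨x, y⟩ hp h2
      simp only [mem_Tr, Prod.mk.injEq] at hp h2
      have := sq_nonneg x
      have := sq_nonneg y
      omega
  · rintro ⟨x, y⟩ hp
    simp only [mem_coe, mem_Tr, HasAntidiagonal.mem_antidiagonal] at *
    have := sq_nonneg x
    have := sq_nonneg y
    omega

lemma Tr_par {m : ℕ} (hm : m % 2 = 0) {p : ℤ × ℤ} (hp : p ∈ Tr m) : (p.1 - p.2) % 2 = 0 := by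
  rw [mem_Tr] at hp
  have h1 : (p.1 ^ 2 + 3 * p.2 ^ 2) % 2 = 0 := by rw [hp]; omega
  have h2 : (p.1 - p.2) * (p.1 + p.2) = (p.1 ^ 2 + 3 * p.2 ^ 2) - 2 * (2 * p.2^2) := by ring
  have h3 : ((p.1 - p.2) * (p.1 + p.2)) % 2 = 0 := by rw [h2]; omega
  rcases Int.emod_two_eq_zero_or_one (p.1 - p.2) with h | h
  · exact h
  · have : (p.1 + p.2) % 2 = 1 := by omega
    rw [Int.mul_emod, h, this] at h3; norm_num at h3

lemma Tr_card {m : ℕ} (hm : m % 2 = 0) (h0 : m ≠ 0) : ((Tr m).card : ZMod 3) = 0 := by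
  have : Fact (Nat.Prime 3) := ⟨Nat.prime_three⟩
  have key : ∀ p ∈ Tr m, ((-p.1 - 3 * p.2) / 2, (p.1 - p.2) / 2) ∈ Tr m := by
    intro p hp
    have h := Tr_par hm hp
    rw [mem_Tr] at *
    obtain ⟨c, hc⟩ : ∃ c, p.1 = p.2 + 2 * c := ⟨(p.1-p.2)/2, by omega⟩
    have e1 : (-p.1 - 3 * p.2) / 2 = -2 * p.2 - c := by omega
    have e2 : (p.1 - p.2) / 2 = c := by omega
    simp only [e1, e2]; rw [← hp, hc]; ring
  let f : Function.End (Tr m) := fun p => ⟨_, key p.1 p.2⟩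
  have hf : f ^ 3 ^ 1 = 1 := by
    funext ⟨⟨x, y⟩, hp⟩
    have h := Tr_par hm hp
    have e : (f ^ 3 ^ 1) = f * f * f := by simp [pow_succ]
    rw [e]
    change f (f (f _)) = _
    apply Subtype.ext
    change (_, _) = (x, y)
    simp only [f] at h ⊢
    ext <;> dsimp only <;> omega
  have := Equiv.Perm.card_fixedPoints_modEq hf
  rw [Fintype.card_coe] at this
  rw [← Nat.cast_zero, ZMod.natCast_eq_natCast_iff]
  refine this.trans ?_
  have : IsEmpty f.fixedPoints := by
    constructor
    rintro ⟨⟨⟨x, y⟩, hp⟩, hfix⟩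
    have h := Tr_par hm hp
    have hfix : f _ = _ := hfix
    have h2 := congrArg Subtype.val hfix
    simp only [f, Prod.mk.injEq] at h2
    dsimp only at h
    have hx : x = 0 := by omega
    have hy : y = 0 := by omega
    rw [mem_Tr] at hp
    subst hx hy
    simp at hp
    omega
  rw [Fintype.card_eq_zero]

lemma Bs4_add_Cs4 : Bs ^ 4 + Cs ^ 4 = 2 := by
  have : Cs ^ 4 = evalNegHom (Bs ^ 4) := by simp [Cs]
  rw [this, show Bs ^ 4 = Bs * Bs ^ 3 by ring]
  ext m
  rw [map_add, evalNegHom, coeff_rescale, coeff_Bs4]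
  rcases Nat.eq_zero_or_pos m with rfl | hm
  · have : Tr 0 = {(0,0)} := by decide
    rw [this]; simp; norm_num
    exact (map_ofNat constantCoeff 2).symm
  · have h2 : coeff m (2 : F3X) = 0 := by
      rw [← Nat.cast_ofNat (R := F3X), ← map_natCast (C (R := ZMod 3)), coeff_C]; simp; omega
    rw [h2]
    rcases Nat.even_or_odd m with h | h
    · rw [Tr_card (by rcases h with ⟨k, rfl⟩; omega) (by omega)]; simp
    · rw [h.neg_one_pow]; ring

lemma cc_Bs : constantCoeff Bs = 1 := by
  rw [← coeff_zero_eq_constantCoeff_apply, coeff_Bs]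
  have : Sq 0 = {0} := by decide
  simp [this]
lemma cc_Cs : constantCoeff Cs = 1 := by
  rw [← coeff_zero_eq_constantCoeff_apply, coeff_Cs]
  have : Sq 0 = {0} := by decide
  simp [this]
lemma Bs_ne : Bs ≠ 0 := by intro h; have := cc_Bs; simp [h] at this
lemma Cs_ne : Cs ≠ 0 := by intro h; have := cc_Cs; simp [h] at this

lemma U3_G (G : F3X) (hG : G * Bs = Cs) : U3 G = Bs * Cs ^ 3 := by
  have : Fact (Nat.Prime 3) := ⟨Nat.prime_three⟩
  have h3 := three_eq_zero
  have h4 := Bs4_add_Cs4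
  have hC4 : Cs ^ 4 = -(1 + Bs ^ 4) := by linear_combination h4 + h3
  have e1 : G * (Bs * Cs) ^ 3 = -(Bs ^ 2 + 1 * (Bs ^ 2)^ 3) := by
    linear_combination Cs ^ 3 * Bs ^ 2 * hG + Bs ^ 2 * hC4
  have e2 := congrArg U3 e1
  rw [U3_mul_cube, U3_neg, U3_add, U3_mul_cube, U3_sq _ Bs_two, U3_Bs] at e2
  have h1 : U3 1 = 1 := by
    ext n; simp [U3, coeff_one]
  rw [h1] at e2
  apply mul_right_cancel₀ (mul_ne_zero Bs_ne Cs_ne)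
  rw [e2]
  linear_combination -Bs^2 * hC4

lemma no_rep (k n : ℕ) : ∀ x y : ℤ, x ^ 2 + 3 * y ^ 2 ≠ 3 ^ k * (3 * n + 2) := by
  induction k with
  | zero =>
    intro x y h
    have h2 : (x ^ 2) % 3 = 2 := by omega
    rw [sq, Int.mul_emod] at h2
    have : x % 3 = 0 ∨ x % 3 = 1 ∨ x % 3 = 2 := by omega
    rcases this with h | h | h <;> simp [h] at h2
  | succ k ih =>
    intro x y h
    have : (3:ℤ) ∣ x := Int.Prime.dvd_pow' (n := x) (k := 2) (p := 3) Nat.prime_three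
      ⟨3 ^ k * (3 * n + 2) - y^2, by push_cast; rw [pow_succ 3 k] at h; linarith⟩
    obtain ⟨c, rfl⟩ := this
    apply ih y c
    rw [pow_succ 3 k] at h; linarith

lemma coeff_BC (k n : ℕ) : coeff (3 ^ k * (3 * n + 2)) (Bs * Cs ^ 3) = 0 := by
  rw [frob_eq, coeff_mul]
  apply Finset.sum_eq_zero
  rintro ⟨i, j⟩ hij
  rw [HasAntidiagonal.mem_antidiagonal] at hij
  simp only [coeff_expand, coeff_Bs, coeff_Cs] at *
  split_ifs with h
  · obtain ⟨l, rfl⟩ := h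
    rw [Nat.mul_div_cancel_left _ (by norm_num)]
    rcases (Sq i).eq_empty_or_nonempty with h | ⟨x, hx⟩
    · simp [h]
    rcases (Sq l).eq_empty_or_nonempty with h | ⟨y, hy⟩
    · simp [h]
    rw [mem_Sq] at hx hy
    exfalso
    apply no_rep k n x y
    rw [hx, hy]; exact_mod_cast hij
  · simp

/-- q-Pochhammer (X^2;X^2)_m -/
noncomputable def pq (m : ℕ) : F3X := ∏ k ∈ Finset.range m, (1 - X ^ (2 * (k + 1)))

lemma pq_succ (m : ℕ) : pq (m+1) = pq m * (1 - X ^ (2 * (m + 1))) := by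
  simp [pq, Finset.prod_range_succ]

lemma pq_cc (m : ℕ) : constantCoeff (pq m) = 1 := by
  simp [pq, map_prod]

/-- its inverse, zero for negative index -/
noncomputable def uq (m : ℤ) : F3X := if m < 0 then 0 else (pq m.toNat)⁻¹

lemma pq_mul_uq (m : ℕ) : pq m * uq m = 1 := by
  have : Fact (Nat.Prime 3) := ⟨Nat.prime_three⟩
  simp only [uq]
  rw [if_neg (by omega), Int.toNat_natCast]
  exact PowerSeries.mul_inv_cancel _ (by rw [pq_cc]; exact one_ne_zero)

lemma uq_neg {m : ℤ} (h : m < 0) : uq m = 0 := by simp [uq, h]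

lemma uq_pred (m : ℕ) : uq ((m:ℤ) - 1) = (1 - X ^ (2 * m)) * uq m := by
  rcases m with _ | m
  · simp [uq_neg]
  · have h1 := pq_mul_uq m
    have h2 := pq_mul_uq (m+1)
    rw [pq_succ] at h2
    push_cast at *
    rw [add_sub_cancel_right]
    linear_combination ((1 - X ^ (2 * (m + 1))) * uq (m+1)) * h1 - uq m * h2

noncomputable def dq (y : F3X) (n : ℕ) (j : ℤ) : F3X :=
  y ^ (j.natAbs ^ 2) * pq (2 * n) * uq (n - j) * uq (n + j)

lemma dq_supp (y : F3X) (n : ℕ) (j : ℤ) (h : dq y n j ≠ 0) : j ∈ Finset.Icc (-(n:ℤ)) n := by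
  rw [mem_Icc]
  by_contra hc
  apply h
  rcases lt_or_ge ((n:ℤ) - j) 0 with h1 | h1
  · simp [dq, uq_neg h1]
  · simp [dq, uq_neg (show (n:ℤ) + j < 0 by omega)]

lemma key_id (x : F3X) (a b : ℕ) (h : 1 ≤ a + b) :
    (1 - x ^ (a+b-1)) * (1 - x^(a+b)) = (1-x^a)*(1-x^b)*(1+x^(a+b-1)) + x^a*((1-x^b)*(1-x^(b-1)))
      + x^b*((1-x^a)*(1-x^(a-1))) := by
  rcases a with _ | a
  · simp; ring
  rcases b with _ | b
  · simp; ring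
  · have : a + 1 + (b+1) - 1 = a + b + 1 := by omega
    rw [this]
    simp only [Nat.add_sub_cancel]
    ring

lemma uq_pred2 (a : ℕ) : uq ((a:ℤ) - 2) = (1 - X ^ (2 * a)) * (1 - X^(2*(a-1))) * uq a := by
  rcases a with _ | a
  · simp [uq_neg]
  · have h1 := uq_pred (a+1)
    have h2 := uq_pred a
    push_cast at *
    rw [add_sub_cancel_right] at h1
    rw [show (a:ℤ) + 1 - 2 = a - 1 by ring, h2, h1]
    try simp only [Nat.add_sub_cancel]
    ring

lemma dq_rec (y : F3X) (hy : y ^ 2 = X ^ 2) (n : ℕ) (j : ℤ) :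
    dq y (n+1) j = (1 + y ^ (2 * (2 * n + 1))) * dq y n j +
      y ^ (2*n+1) * (dq y n (j-1) + dq y n (j+1)) := by
  rcases lt_or_ge ((n:ℤ) - j + 1) 0 with h1 | h1
  · simp only [dq]
    push_cast
    rw [uq_neg (show (n:ℤ) + 1 - j < 0 by omega), uq_neg (show (n:ℤ) - j < 0 by omega),
      uq_neg (show (n:ℤ) - (j-1) < 0 by omega), uq_neg (show (n:ℤ) - (j+1) < 0 by omega)]
    ring
  rcases lt_or_ge ((n:ℤ) + j + 1) 0 with h2 | h2
  · simp only [dq]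
    push_cast
    rw [uq_neg (show (n:ℤ) + 1 + j < 0 by omega), uq_neg (show (n:ℤ) + j < 0 by omega),
      uq_neg (show (n:ℤ) + (j-1) < 0 by omega), uq_neg (show (n:ℤ) + (j+1) < 0 by omega)]
    ring
  obtain ⟨a, ha⟩ := Int.eq_ofNat_of_zero_le h1
  obtain ⟨b, hb⟩ := Int.eq_ofNat_of_zero_le h2
  have hab : a + b = 2 * n + 2 := by omega
  simp only [dq]
  push_cast
  rw [show (n:ℤ) + 1 - j = a by omega, show (n:ℤ) + 1 + j = b by omega,
    show (n:ℤ) - j = a - 1 by omega, show (n:ℤ) + j = b - 1 by omega,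
    show (n:ℤ) - (j-1) = a by omega, show (n:ℤ) + (j-1) = b - 2 by omega,
    show (n:ℤ) - (j+1) = a - 2 by omega, show (n:ℤ) + (j+1) = b by omega,
    uq_pred, uq_pred, uq_pred2, uq_pred2]
  have hp : pq (2 * (n+1)) = pq (2*n) * (1 - (X^2)^(a+b-1)) * (1 - (X^2)^(a+b)) := by
    rw [show 2 * (n+1) = 2 * n + 1 + 1 by ring, pq_succ, pq_succ, hab,
      show 2 * n + 2 - 1 = 2 * n + 1 by omega]
    ring
  have e1 : y ^ (2*n+1) * y ^ ((j-1).natAbs^2) = y ^ (j.natAbs ^ 2) * (X^2)^a := by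
    rw [← hy, ← pow_mul, ← pow_add, ← pow_add]
    congr 1
    zify
    rw [sq_abs, sq_abs, ← show (n:ℤ) - j + 1 = a from ha]; ring
  have e2 : y ^ (2*n+1) * y ^ ((j+1).natAbs^2) = y ^ (j.natAbs ^ 2) * (X^2)^b := by
    rw [← hy, ← pow_mul, ← pow_add, ← pow_add]
    congr 1
    zify
    rw [sq_abs, sq_abs, ← show (n:ℤ) + j + 1 = b from hb]; ring
  have e3 : y ^ (2 * (2*n+1)) = (X^2)^(a+b-1) := by
    rw [pow_mul, hy, hab]; rfl
  have hk := key_id (X^2) a b (by omega)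
  rw [hp, e3]
  simp only [pow_mul (X : F3X) 2]
  linear_combination y ^ (j.natAbs ^ 2) * pq (2*n) * uq a * uq b * hk
    - (pq (2*n) * uq a * uq b * ((1-(X^2)^b)*(1-(X^2)^(b-1)))) * e1
    - (pq (2*n) * uq a * uq b * ((1-(X^2)^a)*(1-(X^2)^(a-1)))) * e2

lemma dq_fin (y : F3X) (n : ℕ) : Function.HasFiniteSupport (dq y n) :=
  (Finset.Icc (-(n:ℤ)) n).finite_toSet.subset (fun j hj => dq_supp y n j hj)

lemma finite_jtp (y : F3X) (hy : y ^ 2 = X ^ 2) (n : ℕ) :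
    ∑ᶠ j, dq y n j = (∏ k ∈ Finset.range n, (1 + y ^ (2*k+1))) ^ 2 := by
  induction n with
  | zero =>
    rw [finsum_eq_single _ 0]
    · have := pq_mul_uq 0
      simp only [pq] at this
      simp at this
      simp [dq, pq, this]
    · intro j hj
      by_contra h
      have := dq_supp y 0 j h
      simp at this; omega
  | succ n ih =>
    have f0 := dq_fin y n
    have f1 : Function.HasFiniteSupport (fun j => dq y n (j - 1)) := by
      apply (Finset.Icc (-(n:ℤ)) (n+1)).finite_toSet.subset
      intro j hj
      have := dq_supp y n _ hj
      simp at this ⊢; omega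
    have f2 : Function.HasFiniteSupport (fun j => dq y n (j + 1)) := by
      apply (Finset.Icc (-(n:ℤ)-1) n).finite_toSet.subset
      intro j hj
      have := dq_supp y n _ hj
      simp at this ⊢; omega
    have f3 : Function.HasFiniteSupport (fun j => dq y n (j-1) + dq y n (j + 1)) :=
      (f1.union f2).subset (Function.support_add _ _)
    have g0 : Function.HasFiniteSupport (fun j => (1 + y ^ (2 * (2 * n + 1))) * dq y n j) := f0.subset (fun j hj => right_ne_zero_of_mul hj)
    have g3 : Function.HasFiniteSupport (fun j => y ^ (2*n+1) * (dq y n (j-1) + dq y n (j + 1))) := f3.subset (fun j hj => right_ne_zero_of_mul hj)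
    simp only [dq_rec y hy]
    rw [finsum_add_distrib g0 g3, ← mul_finsum' _ _ f0, ← mul_finsum' _ _ f3, finsum_add_distrib f1 f2]
    have s1 : ∑ᶠ j, dq y n (j-1) = ∑ᶠ j, dq y n j := finsum_comp_equiv (Equiv.subRight (1:ℤ))
    have s2 : ∑ᶠ j, dq y n (j+1) = ∑ᶠ j, dq y n j := finsum_comp_equiv (Equiv.addRight (1:ℤ))
    rw [s1, s2, ih, Finset.prod_range_succ]
    ring

lemma pq_ratio (k m : ℕ) : ∃ s, pq (k + m) * uq k = 1 + X ^ (2 * k + 2) * s := by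
  induction m with
  | zero => exact ⟨0, by rw [Nat.add_zero, pq_mul_uq]; ring⟩
  | succ m ih =>
    obtain ⟨s, hs⟩ := ih
    refine ⟨s - X ^ (2 * m) * (1 + X^(2*k+2) * s), ?_⟩
    rw [← add_assoc, pq_succ]
    have : (X : F3X) ^ (2 * (k + m + 1)) = X ^ (2*k+2) * X ^ (2 * m) := by rw [← pow_add]; congr 1; ring
    rw [this]
    linear_combination (1 - X ^ (2*k+2) * X ^ (2 * m)) * hs

lemma jtp_trunc (y : F3X) (hy : y ^ 2 = X ^ 2) (hy1 : X ∣ y) (n : ℕ) :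
    X ^ (2*n+1) ∣ pq n * (∏ k ∈ Finset.range n, (1 + y ^ (2*k+1))) ^ 2 -
      ∑ j ∈ Finset.Icc (-(n:ℤ)) n, y ^ (j.natAbs^2) := by
  rw [← finite_jtp y hy, finsum_eq_sum_of_support_subset (s := Finset.Icc (-(n:ℤ)) n) _
    (fun j hj => dq_supp y n j hj), Finset.mul_sum, ← Finset.sum_sub_distrib]
  apply Finset.dvd_sum
  intro j hj
  rw [mem_Icc] at hj
  have hsym : dq y n j = y ^ (j.natAbs ^ 2) * pq (2 * n) * uq ((n - j.natAbs : ℕ) : ℤ) * uq ((n + j.natAbs : ℕ) : ℤ) := by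
    rcases le_total 0 j with h | h
    · simp only [dq]
      rw [show (((n - j.natAbs : ℕ) : ℤ)) = n - j by omega, show (((n + j.natAbs : ℕ) : ℤ)) = n + j by omega]
    · simp only [dq]
      rw [show (((n - j.natAbs : ℕ) : ℤ)) = n + j by omega, show (((n + j.natAbs : ℕ) : ℤ)) = n - j by omega]
      ring
  rw [hsym]
  have hl : j.natAbs ≤ n := by omega
  set l := j.natAbs
  obtain ⟨s, hs⟩ := pq_ratio (n - l) l
  obtain ⟨t, ht⟩ := pq_ratio (n + l) (n - l)
  rw [show n - l + l = n by omega] at hs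
  rw [show n + l + (n - l) = 2 * n by omega] at ht
  have e : pq n * (y ^ (l ^ 2) * pq (2 * n) * uq ((n - l : ℕ) : ℤ) * uq ((n + l : ℕ) : ℤ)) - y ^ (l^2)
     = y ^ (l^2) * X ^ (2 * (n-l) + 2) * (s + X ^ (4 * l) * t + X ^ (2 * (n+l) + 2) * s * t) := by
    have h4 : (X:F3X) ^ (2 * (n+l) + 2) = X ^ (2 * (n-l) + 2) * X ^ (4 * l) := by
      rw [← pow_add]; congr 1; omega
    rw [h4] at ht ⊢
    linear_combination y ^ (l^2) * pq (2*n) * uq ((n + l : ℕ) : ℤ) * hs + y ^ (l^2) * (1 + X ^ (2 * (n-l) + 2) * s) * ht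
  rw [e]
  apply Dvd.dvd.mul_right
  calc (X:F3X)^(2*n+1) ∣ X ^ (l^2) * X ^ (2 * (n-l) + 2) := by
        rw [← pow_add]; apply pow_dvd_pow
        zify [hl]; nlinarith [sq_nonneg ((l:ℤ) - 1)]
    _ ∣ _ := mul_dvd_mul_right (pow_dvd_pow_of_dvd hy1 _) _

lemma Sq_sum (y : F3X) (c : ℕ → ZMod 3) (hc : ∀ j : ℤ, ∀ N, coeff N (y ^ (j.natAbs^2)) = if j^2 = N then c N else 0)
   (n N : ℕ) (h : N ≤ n) : coeff N (∑ j ∈ Finset.Icc (-(n:ℤ)) n, y ^ (j.natAbs^2)) = c N * (Sq N).card := by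
  rw [map_sum]
  simp only [hc]
  rw [← Finset.sum_filter]
  have : (Finset.Icc (-(n:ℤ)) n).filter (fun j => j^2 = (N:ℤ)) = Sq N := by
    ext j
    rw [mem_Sq, mem_filter, and_iff_right_iff_imp]
    intro hj
    have := (mem_Sq N j).2 hj
    simp only [Sq, mem_filter, mem_Icc] at this ⊢
    omega
  rw [this]; simp; ring

lemma coeff_Xsq (j : ℤ) (N : ℕ) : coeff N ((X:F3X) ^ (j.natAbs^2)) = if j^2 = N then (fun _ => 1) N else 0 := by
  rw [coeff_X_pow]
  have : N = j.natAbs^2 ↔ j^2 = N := by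
    zify; rw [sq_abs, eq_comm]
  simp [this]

lemma coeff_nXsq (j : ℤ) (N : ℕ) : coeff N ((-X:F3X) ^ (j.natAbs^2)) = if j^2 = N then (fun n => (-1)^n) N else 0 := by
  rw [← rescale_neg_one_X, ← map_pow, coeff_rescale, coeff_Xsq]
  simp

lemma jtp_B (n : ℕ) : X ^ (n+1) ∣ pq n * (∏ k ∈ Finset.range n, (1 + (X:F3X) ^ (2*k+1))) ^ 2 - Bs := by
  have h1 : (X:F3X)^(n+1) ∣ _ := (pow_dvd_pow X (by omega)).trans (jtp_trunc X rfl dvd_rfl n)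
  have h2 : (X:F3X)^(n+1) ∣ ∑ j ∈ Finset.Icc (-(n:ℤ)) n, X ^ (j.natAbs^2) - Bs := by
    rw [X_pow_dvd_iff]
    intro m hm
    rw [map_sub, Sq_sum X _ coeff_Xsq n m (by omega), coeff_Bs]; simp
  simpa using dvd_add h1 h2

lemma jtp_C (n : ℕ) : X ^ (n+1) ∣ pq n * (∏ k ∈ Finset.range n, (1 - (X:F3X) ^ (2*k+1))) ^ 2 - Cs := by
  have h1 : (X:F3X)^(n+1) ∣ _ := (pow_dvd_pow X (by omega)).trans (jtp_trunc (-X) (by ring) (by simp) n)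
  have h2 : (X:F3X)^(n+1) ∣ ∑ j ∈ Finset.Icc (-(n:ℤ)) n, (-X) ^ (j.natAbs^2) - Cs := by
    rw [X_pow_dvd_iff]
    intro m hm
    rw [map_sub, Sq_sum (-X) _ coeff_nXsq n m (by omega), coeff_Cs]; simp
  have h3 := dvd_add h1 h2
  have h4 : ∀ k, (1 : F3X) + (-X)^(2*k+1) = 1 - X^(2*k+1) := by
    intro k
    rw [Odd.neg_pow ⟨k, rfl⟩]; ring
  simpa [h4] using h3

open Filter Topology PowerSeries.WithPiTopology

lemma tendsto_of_dvd (a : ℕ → F3X) (b : F3X) (h : ∀ n, X ^ (n+1) ∣ a n - b) : Tendsto a atTop (𝓝 b) := by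
  rw [tendsto_iff_coeff_tendsto]
  intro d
  apply tendsto_atTop_of_eventually_const (i₀ := d)
  intro n hn
  have := X_pow_dvd_iff.1 (h n) d (by omega)
  rwa [map_sub, sub_eq_zero] at this

lemma mult_aux (ε : F3X) (g : ℕ → ℕ) (hg : ∀ n, n ≤ g n) : Multipliable (fun i => 1 + ε * X ^ (g i + 1) : ℕ → F3X) := by
  apply multipliable_one_add_of_tendsto_order_atTop_nhds_top
  refine ENat.tendsto_nhds_top_iff_natCast_lt.mpr (fun n ↦ Filter.eventually_atTop.mpr ⟨n, ?_⟩)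
  intro m hm
  refine lt_of_lt_of_le ?_ (le_order_mul _ _)
  have : Fact (Nat.Prime 3) := ⟨Nat.prime_three⟩
  rw [order_X_pow]
  refine lt_of_lt_of_le ?_ le_add_self
  have := hg m
  norm_cast; omega

lemma exists_EO : ∃ E Op Om : F3X, HasProd (fun k : ℕ => 1 + (X:F3X) ^ (2*k+1)) Op ∧
    HasProd (fun k : ℕ => 1 - (X:F3X) ^ (2*k+1)) Om ∧ E * Op ^ 2 = Bs ∧ E * Om ^ 2 = Cs := by
  have hE : Multipliable (fun k : ℕ => 1 - (X:F3X) ^ (2*(k+1))) := by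
    have := mult_aux (-1) (fun n => 2 * n + 1) (by intro n; omega)
    convert this using 2 with k
    ring
  have hOp : Multipliable (fun k : ℕ => 1 + (X:F3X) ^ (2*k+1)) := by
    have := mult_aux 1 (fun n => 2 * n) (by intro n; omega)
    convert this using 2 with k
    ring
  have hOm : Multipliable (fun k : ℕ => 1 - (X:F3X) ^ (2*k+1)) := by
    have := mult_aux (-1) (fun n => 2 * n) (by intro n; omega)
    convert this using 2 with k
    ring
  refine ⟨∏' k : ℕ, (1 - (X:F3X) ^ (2*(k+1))), _, _, hOp.hasProd, hOm.hasProd, ?_, ?_⟩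
  · exact tendsto_nhds_unique (hE.hasProd.tendsto_prod_nat.mul (hOp.hasProd.tendsto_prod_nat.pow 2)) (tendsto_of_dvd _ _ jtp_B)
  · exact tendsto_nhds_unique (hE.hasProd.tendsto_prod_nat.mul (hOm.hasProd.tendsto_prod_nat.pow 2)) (tendsto_of_dvd _ _ jtp_C)

/-- removing multiples of three -/
lemma cube_split (ε : F3X) (hε : ε ^ 3 = ε) (O : F3X)
    (hO : HasProd (fun k : ℕ => 1 + ε * (X:F3X) ^ (2*k+1)) O) (N : F3X)
    (hN : HasProd (fun i : ℕ => if ¬ 2 ∣ i + 1 ∧ ¬ 3 ∣ i + 1 then 1 + ε * (X:F3X) ^ (i+1) else 1) N) :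
    O = N * O ^ 3 := by
  have h3 : HasProd (fun k : ℕ => 1 + ε * (X:F3X) ^ (3 * (2*k+1))) (O^3) := by
    have := (hO.mul hO).mul hO
    convert this using 2 with k
    · rw [pow_mul']
      linear_combination (- (ε * (X:F3X) ^ (2*k+1)) - (ε * (X:F3X) ^ (2*k+1))^2) * three_eq_zero - (X ^ (2*k+1))^3 * hε
    · ring
  have hM : HasProd (fun k : ℕ => if 3 ∣ 2 * k + 1 then 1 + ε * (X:F3X) ^ (2*k+1) else 1) (O^3) := by
    have inj : Function.Injective (fun k : ℕ => 3 * k + 1) := by intro a b h; simpa using h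
    rw [← inj.hasProd_iff]
    · convert h3 using 2 with k
      simp only [Function.comp]
      rw [if_pos (by omega)]
      congr 3; ring
    · intro k hk
      rw [if_neg]
      intro h
      exact hk ⟨(k-1)/3, by simp; omega⟩
  have hN2 : HasProd (fun k : ℕ => if 3 ∣ 2 * k + 1 then 1 else 1 + ε * (X:F3X) ^ (2*k+1)) N := by
    have inj : Function.Injective (fun k : ℕ => 2 * k) := by intro a b h; simpa using h
    rw [← inj.hasProd_iff] at hN
    · convert hN using 2 with k
      simp only [Function.comp]
      by_cases h : 3 ∣ 2 * k + 1
      · rw [if_pos h, if_neg (by tauto)]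
      · rw [if_neg h, if_pos ⟨by omega, h⟩]
    · intro k hk
      rw [if_neg]
      intro h
      exact hk ⟨k/2, by simp; omega⟩
  have := hN2.mul hM
  refine hO.unique ?_
  convert this using 2 with k
  split_ifs <;> simp

lemma hasProd_R (p : ℕ) [Fact p.Prime] : ∃ Nm : (PowerSeries (ZMod p)),
    HasProd (fun i : ℕ => if ¬ 2 ∣ i + 1 ∧ ¬ 3 ∣ i + 1 then 1 + (-1) * (X:(PowerSeries (ZMod p))) ^ (i+1) else 1) Nm ∧
    (PowerSeries.mk fun n => (regularCount 2 3 n : ZMod p)) * Nm = 1 := by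
  have hR := Nat.Partition.hasProd_powerSeriesMk_card_restricted (ZMod p) (fun i => ¬ 2 ∣ i ∧ ¬ 3 ∣ i)
  have hM : Multipliable (fun i : ℕ => if ¬ 2 ∣ i + 1 ∧ ¬ 3 ∣ i + 1 then 1 + (-1) * (X:(PowerSeries (ZMod p))) ^ (i+1) else 1) := by
    have : Multipliable (fun i : ℕ => 1 + (if ¬ 2 ∣ i + 1 ∧ ¬ 3 ∣ i + 1 then (-1) * (X:(PowerSeries (ZMod p))) ^ (i+1) else 0)) := by
      apply multipliable_one_add_of_tendsto_order_atTop_nhds_top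
      refine ENat.tendsto_nhds_top_iff_natCast_lt.mpr (fun n ↦ Filter.eventually_atTop.mpr ⟨n, ?_⟩)
      intro m hm
      split_ifs
      · rw [neg_one_mul, order_neg, order_X_pow]; norm_cast; omega
      · simp
    convert this using 2 with i
    split_ifs <;> simp
  refine ⟨_, hM.hasProd, ?_⟩
  have e : (PowerSeries.mk fun n => (regularCount 2 3 n : ZMod p)) =
      (PowerSeries.mk fun n ↦ (((Nat.Partition.restricted n (fun i => ¬ 2 ∣ i ∧ ¬ 3 ∣ i)).card : ℕ) : ZMod p)) := by
    ext n
    simp only [coeff_mk, regularCount, Nat.Partition.restricted, Fintype.card_subtype]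
  rw [e]
  refine (hR.mul hM.hasProd).unique ?_
  convert hasProd_one using 2 with i
  split_ifs with h
  · have := tsum_pow_mul_one_sub_of_constantCoeff_eq_zero (R := ZMod p) (f := X ^ (i+1)) (by simp)
    simp only [← pow_mul] at this
    refine Eq.trans ?_ this; ring
  · simp

lemma hasProd_D (p : ℕ) [Fact p.Prime] :
    HasProd (fun i : ℕ => if ¬ 2 ∣ i + 1 ∧ ¬ 3 ∣ i + 1 then 1 + 1 * (X:(PowerSeries (ZMod p))) ^ (i+1) else 1)
    (PowerSeries.mk fun n => (regularDistinctCount 2 3 n : ZMod p)) := by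
  convert! Nat.Partition.hasProd_genFun (fun i c ↦ if c < 2 ∧ ¬ 2 ∣ i ∧ ¬ 3 ∣ i then (1 : ZMod p) else 0) using 1
  · ext1 i
    rw [tsum_eq_single 0]
    · by_cases h : ¬ 2 ∣ i + 1 ∧ ¬ 3 ∣ i + 1
      · rw [if_pos h, if_pos ⟨by norm_num, h⟩]; simp
      · rw [if_neg h, if_neg (by tauto)]; simp
    · intro b hb
      rw [if_neg (by omega), zero_smul]
  · ext n
    simp_rw [Nat.Partition.genFun, coeff_mk, regularDistinctCount, Fintype.card_subtype, card_filter, Finsupp.prod, prod_boole]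
    push_cast
    apply Finset.sum_congr rfl
    intro q _
    congr 1
    simp only [Multiset.toFinsupp_support, Multiset.mem_toFinset, Multiset.toFinsupp_apply, eq_iff_iff]
    rw [Multiset.nodup_iff_count_le_one]
    constructor
    · rintro ⟨h1, h2⟩ i hi
      exact ⟨by have := h1 i; omega, h2 i hi⟩
    · intro h
      refine ⟨fun i => ?_, fun i hi => (h i hi).2⟩
      by_cases hi : i ∈ q.parts
      · have := (h i hi).1; omega
      · rw [Multiset.count_eq_zero_of_notMem hi]; omega

lemma G_eq : (PowerSeries.mk fun n => (Rbar 2 3 n : ZMod 3)) * Bs = Cs := by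
  have : Fact (Nat.Prime 3) := ⟨Nat.prime_three⟩
  obtain ⟨Nm, hNm, hR⟩ := hasProd_R 3
  have hD := hasProd_D 3
  obtain ⟨E, Op, Om, hOp, hOm, hB, hC⟩ := exists_EO
  have e : (PowerSeries.mk fun n => (Rbar 2 3 n : ZMod 3)) =
    (PowerSeries.mk fun n => (regularCount 2 3 n : ZMod 3)) * (PowerSeries.mk fun n => (regularDistinctCount 2 3 n : ZMod 3)) := by
    ext n
    simp [coeff_mul, Rbar]
  rw [e]
  set R : F3X := PowerSeries.mk fun n => (regularCount 2 3 n : ZMod 3)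
  set D : F3X := PowerSeries.mk fun n => (regularDistinctCount 2 3 n : ZMod 3)
  have c1 := cube_split 1 (by ring) Op (by simpa using hOp) D hD
  have c2 := cube_split (-1) (by ring) Om (by simpa [sub_eq_add_neg] using hOm) Nm hNm
  have nOp : Op ≠ 0 := by
    rintro rfl; apply Bs_ne; rw [← hB]; ring
  have nOm : Om ≠ 0 := by
    rintro rfl; apply Cs_ne; rw [← hC]; ring
  have d1 : D * Op ^ 2 = 1 := mul_right_cancel₀ nOp (by linear_combination -c1)
  have d2 : Nm * Om ^ 2 = 1 := mul_right_cancel₀ nOm (by linear_combination -c2)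
  rw [← hB, ← hC]
  linear_combination R * E * d1 - R * E * d2 + E * Om ^ 2 * hR

lemma Rbar_mod_three (k n : ℕ) : (Rbar 2 3 (3 ^ (k+1) * (3 * n + 2)) : ZMod 3) = 0 := by
  have h := congrArg (coeff (3 ^ k * (3 * n + 2))) (U3_G _ G_eq)
  rw [coeff_BC] at h
  simp only [U3, coeff_mk] at h
  rwa [← mul_assoc, ← pow_succ'] at h

lemma neg_one_zmod_two : (-1 : ZMod 2) = 1 := by decide

lemma Rbar_mod_two (n : ℕ) (hn : n ≠ 0) : (Rbar 2 3 n : ZMod 2) = 0 := by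
  have : Fact (Nat.Prime 2) := ⟨Nat.prime_two⟩
  obtain ⟨Nm, hNm, hR⟩ := hasProd_R 2
  have hD := hasProd_D 2
  have h1 : (-1 : PowerSeries (ZMod 2)) = 1 := by
    have h : (-1 : ZMod 2) = 1 := neg_one_zmod_two
    have := congrArg (C (R := ZMod 2)) h
    rwa [map_neg, map_one] at this
  rw [h1] at hNm
  rw [hNm.unique hD] at hR
  have := congrArg (coeff n) hR
  rw [coeff_mul, coeff_one, if_neg hn] at this
  simpa [Rbar] using this

end helpers

theorem Rbar_two_three_pow_three (β n : ℕ) (hβ : 1 ≤ β) :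
    Rbar 2 3 (3 ^ β * (3 * n + 2)) ≡ 0 [MOD 6] := by
  obtain ⟨k, rfl⟩ : ∃ k, β = k + 1 := ⟨β - 1, by omega⟩
  have h3 := (ZMod.natCast_eq_zero_iff _ _).1 (Rbar_mod_three k n)
  have h2 := (ZMod.natCast_eq_zero_iff _ _).1
    (Rbar_mod_two (3 ^ (k+1) * (3 * n + 2)) (by positivity))
  rw [Nat.modEq_zero_iff_dvd]
  omega
end

section
/- For all integers n ≥ 1, the number of (4,3)-regular overpartitions satisfies R̄_{4,3}(2n) ≡ 0 (mod 4). -/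
open Finset PowerSeries in
open scoped PowerSeries.WithPiTopology in
theorem aux_mul (R : Type*) [CommSemiring R] [TopologicalSpace R] [T2Space R]
    [IsTopologicalSemiring R] (P : ℕ → Prop) [DecidablePred P] :
    Nat.Partition.genFun (fun i _ => if P i then (1 : R) else 0) *
      Nat.Partition.genFun (fun i c => if c = 1 ∧ P i then (1 : R) else 0) =
    Nat.Partition.genFun (fun i _ => if P i then (2 : R) else 0) := by
  have h1 := Nat.Partition.hasProd_genFun (fun i _ => if P i then (1 : R) else 0)
  have h2 := Nat.Partition.hasProd_genFun (fun i c => if c = 1 ∧ P i then (1 : R) else 0)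
  have h3 := Nat.Partition.hasProd_genFun (fun i _ => if P i then (2 : R) else 0)
  refine (h1.mul h2).unique ?_
  convert! h3 using 1
  ext1 i
  by_cases hP : P (i + 1)
  · have hs : Summable fun j : ℕ => (X : R⟦X⟧) ^ ((i + 1) * (j + 1)) := by
      simpa using Nat.Partition.summable_genFun_term (fun _ _ => (1 : R)) i
    have hG : ∑' j : ℕ, (X : R⟦X⟧) ^ ((i + 1) * (j + 1)) =
        X ^ (i + 1) + (∑' j : ℕ, (X : R⟦X⟧) ^ ((i + 1) * (j + 1))) * X ^ (i + 1) := by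
      have e : (fun j : ℕ => (X : R⟦X⟧) ^ ((i + 1) * (j + 1 + 1))) =
        fun j : ℕ => (X : R⟦X⟧) ^ ((i + 1) * (j + 1)) * X ^ (i + 1) := by
        ext1 j
        rw [← pow_add]
        congr 1
      conv_lhs => rw [tsum_eq_zero_add' (by rw [e]; exact hs.mul_right _)]
      rw [e, hs.tsum_mul_right]
      simp
    have e2 : ∑' j : ℕ, (if j + 1 = 1 ∧ P (i + 1) then (1 : R) else 0) •
        (X : R⟦X⟧) ^ ((i + 1) * (j + 1)) = X ^ (i + 1) := by
      rw [tsum_eq_single 0]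
      · simp [hP]
      · intro j hj
        simp [hj]
    have e3 : ∑' j : ℕ, (if P (i + 1) then (2 : R) else 0) •
        (X : R⟦X⟧) ^ ((i + 1) * (j + 1)) =
        2 * ∑' j : ℕ, (X : R⟦X⟧) ^ ((i + 1) * (j + 1)) := by
      rw [← hs.tsum_mul_left]
      simp [hP, smul_eq_C_mul, show (C (2 : R) : R⟦X⟧) = 2 from map_ofNat _ 2]
    rw [e2, e3]
    simp only [hP, if_true, one_smul]
    generalize (∑' j : ℕ, (X : R⟦X⟧) ^ ((i + 1) * (j + 1))) = G at hG
    calc (1 + G) * (1 + X ^ (i + 1)) = 1 + G + (X ^ (i + 1) + G * X ^ (i + 1)) := by ring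
      _ = 1 + 2 * G := by rw [← hG]; ring
  · simp [hP]

theorem aux_Rbar (ℓ μ n : ℕ) : Rbar ℓ μ n =
    ∑ p : n.Partition, ∏ i ∈ p.parts.toFinset, if ¬ ℓ ∣ i ∧ ¬ μ ∣ i then 2 else 0 := by
  have h := congrArg (PowerSeries.coeff n) (aux_mul ℕ (fun i => ¬ ℓ ∣ i ∧ ¬ μ ∣ i))
  rw [PowerSeries.coeff_mul] at h
  simp only [Nat.Partition.coeff_genFun] at h
  have e3 : ∀ p : n.Partition, (p.parts.toFinsupp.prod
      fun i _ => if ¬ ℓ ∣ i ∧ ¬ μ ∣ i then 2 else 0) =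
      ∏ i ∈ p.parts.toFinset, if ¬ ℓ ∣ i ∧ ¬ μ ∣ i then 2 else 0 := by
    intro p
    simp [Finsupp.prod]
  simp only [e3] at h
  rw [← h, Rbar]
  refine Finset.sum_congr rfl fun ab _ => ?_
  congr 1
  · rw [regularCount, Fintype.card_subtype, Finset.card_filter]
    refine Finset.sum_congr rfl fun p _ => ?_
    simp only [Finsupp.prod, Finset.prod_boole, Multiset.toFinsupp_support, Multiset.mem_toFinset]
  · rw [regularDistinctCount, Fintype.card_subtype, Finset.card_filter]
    refine Finset.sum_congr rfl fun p _ => ?_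
    simp only [Finsupp.prod, Finset.prod_boole, Multiset.toFinsupp_support, Multiset.mem_toFinset]
    refine if_congr ?_ rfl rfl
    simp only [Multiset.toFinsupp_apply]
    rw [Multiset.nodup_iff_count_eq_one, ← forall₂_and]

/-- The partition of `n` into copies of `d`. -/
def replPart (n d : ℕ) (hd : d ∈ n.divisors) : n.Partition where
  parts := Multiset.replicate (n / d) d
  parts_pos := by
    intro i hi
    rw [Multiset.eq_of_mem_replicate hi]
    exact Nat.pos_of_mem_divisors hd
  parts_sum := by
    simp [Nat.div_mul_cancel (Nat.dvd_of_mem_divisors hd)]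

theorem aux_single (n : ℕ) (hn : n ≠ 0) (f : ℕ → ℕ) :
    ∑ p : n.Partition with p.parts.toFinset.card = 1, ∏ i ∈ p.parts.toFinset, f i =
      ∑ d ∈ n.divisors, f d := by
  symm
  have ht : ∀ d (hd : d ∈ n.divisors), (replPart n d hd).parts.toFinset = {d} := by
    intro d hd
    have : n / d ≠ 0 :=
      (Nat.div_pos (Nat.divisor_le hd) (Nat.pos_of_mem_divisors hd)).ne'
    simp [replPart, Multiset.toFinset_replicate, this]
  refine Finset.sum_bij (fun d hd => replPart n d hd) ?_ ?_ ?_ ?_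
  · intro d hd
    simp [ht]
  · intro a ha b hb hab
    have := ht a ha
    rw [hab, ht b hb] at this
    simpa using this.symm
  · intro p hp
    obtain ⟨d, hd⟩ := Finset.card_eq_one.1 (Finset.mem_filter.1 hp).2
    have hmem : ∀ i ∈ p.parts, i = d := by
      intro i hi
      have : i ∈ p.parts.toFinset := Multiset.mem_toFinset.2 hi
      simpa [hd] using this
    have hrep := Multiset.eq_replicate_card.2 hmem
    have hsum := p.parts_sum
    rw [hrep] at hsum
    simp at hsum
    have hdpos : 0 < d := by
      apply p.parts_pos
      rw [← Multiset.mem_toFinset, hd]; simp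
    have hdd : d ∈ n.divisors := Nat.mem_divisors.2 ⟨⟨_, by rw [mul_comm]; exact hsum.symm⟩, hn⟩
    refine ⟨d, hdd, ?_⟩
    apply Nat.Partition.ext
    rw [hrep]
    simp only [replPart]
    congr 1
    conv_lhs => rw [← hsum]
    exact Nat.mul_div_cancel _ hdpos
  · intro d hd
    simp [ht]

theorem aux_even (n : ℕ) (hn : 1 ≤ n) :
    ∃ k, ∑ d ∈ (2 * n).divisors, (if ¬ 4 ∣ d ∧ ¬ 3 ∣ d then 2 else 0) = 4 * k := by
  rw [← Finset.sum_filter_add_sum_filter_not _ (fun d => Odd d)]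
  have : ∑ d ∈ (2 * n).divisors with ¬ Odd d, (if ¬ 4 ∣ d ∧ ¬ 3 ∣ d then 2 else 0) =
      ∑ d ∈ (2 * n).divisors with Odd d, (if ¬ 4 ∣ d ∧ ¬ 3 ∣ d then 2 else 0) := by
    symm
    rw [← Finset.sum_filter, ← Finset.sum_filter, Finset.filter_filter, Finset.filter_filter]
    refine Finset.sum_bij (fun d _ => 2 * d) ?_ ?_ ?_ (by simp)
    · intro d hd
      simp only [Finset.mem_filter, Nat.mem_divisors] at hd ⊢
      obtain ⟨⟨h1, h2⟩, h3, h4, h5⟩ := hd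
      have hc : Nat.Coprime d 2 := h3.coprime_two_right
      have := hc.dvd_of_dvd_mul_left h1
      refine ⟨⟨Nat.mul_dvd_mul_left 2 this, h2⟩, by simp, ?_, ?_⟩ <;> grind
    · intro a _ b _ h
      simpa using h
    · intro b hb
      simp only [Finset.mem_filter, Nat.mem_divisors] at hb
      obtain ⟨⟨h1, h2⟩, h3, h4, h5⟩ := hb
      obtain ⟨c, rfl⟩ : 2 ∣ b := by grind
      refine ⟨c, ?_, rfl⟩
      simp only [Finset.mem_filter, Nat.mem_divisors]
      refine ⟨⟨(Dvd.intro_left 2 rfl).trans h1, h2⟩, by grind, by grind, by grind⟩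
  rw [this, ← Finset.sum_filter, Finset.sum_const, smul_eq_mul]
  exact ⟨_, by rw [← mul_add, ← mul_two]; ring_nf⟩

theorem Rbar_four_three_even_mod_four (n : ℕ) (hn : 1 ≤ n) :
    Rbar 4 3 (2 * n) ≡ 0 [MOD 4] := by
  rw [Nat.modEq_zero_iff_dvd, aux_Rbar,
    ← Finset.sum_filter_add_sum_filter_not _ (fun p => p.parts.toFinset.card = 1),
    aux_single _ (by omega)]
  refine dvd_add (aux_even n hn) (Finset.dvd_sum fun p hp => ?_)
  have hc : p.parts.toFinset.card ≠ 1 := (Finset.mem_filter.1 hp).2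
  have h0 : p.parts.toFinset.card ≠ 0 := by
    intro h
    have h' : p.parts = 0 := by simpa using h
    have := p.parts_sum
    rw [h'] at this
    simp at this
    omega
  refine (pow_dvd_pow 2 (show 2 ≤ p.parts.toFinset.card by omega)).trans ?_
  rw [← Finset.prod_const]
  refine Finset.prod_dvd_prod_of_dvd _ _ fun i _ => ?_
  split_ifs <;> simp
end

section
/- For all integers n ≥ 1 such that n = m² for some odd positive integer m, the number of (4,3)-regular overpartitions satisfies R̄_{4,3}(2n) ≡ 4 (mod 8). -/
open PowerSeries PowerSeries.WithPiTopology in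
theorem aux_hasProd_distinct (R : Type*) [TopologicalSpace R] [T2Space R] [CommRing R] (p : ℕ → Prop) [DecidablePred p] :
    HasProd (fun i ↦ if p (i + 1) then (1 + X ^ (i + 1) : R⟦X⟧) else 1)
    (PowerSeries.mk fun n ↦
      (((Finset.univ : Finset n.Partition).filter
        fun q => ∀ i ∈ q.parts, p i ∧ q.parts.count i < 2).card : R)) := by
  convert! Nat.Partition.hasProd_genFun (fun i c ↦ if p i ∧ c < 2 then (1 : R) else 0) using 1
  · ext1 i
    rw [tsum_eq_single 0]
    · by_cases h : p (i + 1)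
      · simp only [h, if_true, true_and, zero_add, mul_one, show (1:ℕ) < 2 by norm_num]
        rw [one_smul]
      · simp only [h, if_false, false_and]
        rw [zero_smul, add_zero]
    · intro b hb
      have : ¬ (b + 1 < 2) := by omega
      simp only [this, and_false, if_false]
      rw [zero_smul]
  · simp_rw [Nat.Partition.genFun, Finset.card_filter, Finsupp.prod, Finset.prod_boole]
    simp

theorem aux_regularCount (a : ℕ) : regularCount 4 3 a =
    (Nat.Partition.restricted a (fun i => ¬ 4 ∣ i ∧ ¬ 3 ∣ i)).card := by
  rw [regularCount, Nat.Partition.restricted, Fintype.card_subtype]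

theorem aux_regularDistinctCount (a : ℕ) : regularDistinctCount 4 3 a =
    ((Finset.univ : Finset a.Partition).filter
        fun q => ∀ i ∈ q.parts, (¬ 4 ∣ i ∧ ¬ 3 ∣ i) ∧ q.parts.count i < 2).card := by
  rw [regularDistinctCount, Fintype.card_subtype]
  congr 1
  ext q
  simp only [Finset.mem_filter, Finset.mem_univ, true_and, Multiset.nodup_iff_count_le_one]
  constructor
  · rintro ⟨h1, h2⟩ i hi
    exact ⟨h2 i hi, by have := h1 i; omega⟩
  · intro h
    refine ⟨fun i => ?_, fun i hi => (h i hi).1⟩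
    by_cases hi : i ∈ q.parts
    · have := (h i hi).2
      omega
    · rw [Multiset.count_eq_zero_of_notMem hi]
      omega

open PowerSeries PowerSeries.WithPiTopology in
/-- factor of the overpartition generating function -/
noncomputable def auxG (i : ℕ) : ℤ⟦X⟧ := (∑' j : ℕ, (X : ℤ⟦X⟧) ^ (i * j)) * (1 + X ^ i)

open PowerSeries PowerSeries.WithPiTopology in
theorem auxG_mul (i : ℕ) (hi : i ≠ 0) : auxG i * (1 - (X : ℤ⟦X⟧) ^ i) = 1 + X ^ i := by
  have := tsum_pow_mul_one_sub_of_constantCoeff_eq_zero (R := ℤ) (f := (X : ℤ⟦X⟧) ^ i)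
    (by simp [hi])
  rw [auxG]
  simp_rw [pow_mul]
  linear_combination (1 + X ^ i) * this

open PowerSeries PowerSeries.WithPiTopology in
theorem aux_coeff (N : ℕ) : ∃ M0, ∀ M ≥ M0, ((Rbar 4 3 N : ℕ) : ℤ) =
    coeff N (∏ i ∈ Finset.range M,
      if (¬ 4 ∣ (i+1) ∧ ¬ 3 ∣ (i+1)) then auxG (i+1) else (1 : ℤ⟦X⟧)) := by
  have h1 := Nat.Partition.hasProd_powerSeriesMk_card_restricted ℤ (fun i => ¬ 4 ∣ i ∧ ¬ 3 ∣ i)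
  have h2 := aux_hasProd_distinct ℤ (fun i => ¬ 4 ∣ i ∧ ¬ 3 ∣ i)
  have h3 := (h1.mul h2).tendsto_prod_nat
  rw [WithPiTopology.tendsto_iff_coeff_tendsto] at h3
  have h4 := h3 N
  rw [nhds_discrete, Filter.tendsto_pure, Filter.eventually_atTop] at h4
  obtain ⟨M0, h⟩ := h4
  refine ⟨M0, fun M hM => ?_⟩
  have h5 := h M hM
  rw [coeff_mul] at h5
  simp only [coeff_mk, ← aux_regularCount, ← aux_regularDistinctCount] at h5
  rw [Rbar]
  push_cast
  rw [← h5]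
  congr 1
  refine Finset.prod_congr rfl fun i _ => ?_
  split_ifs <;> simp [auxG]

theorem aux_prod {R : Type*} [CommRing R] (g : ℕ → R) (K : ℕ) :
    (∏ i ∈ Finset.range (12 * K), if (¬ 4 ∣ (i+1) ∧ ¬ 3 ∣ (i+1)) then g (i+1) else 1)
      * (∏ j ∈ Finset.range (4 * K), g (3 * (j+1))) * (∏ j ∈ Finset.range (3 * K), g (4 * (j+1)))
    = (∏ j ∈ Finset.range (12 * K), g (1 * (j+1))) * ∏ j ∈ Finset.range K, g (12 * (j+1)) := by
  induction K with
  | zero => simp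
  | succ K ih =>
    have key : ∀ r, ∀ (f : ℕ → R), ∏ i ∈ Finset.range (r * (K+1)), f i =
      (∏ i ∈ Finset.range (r * K), f i) * ∏ t ∈ Finset.range r, f (r * K + t) := by
      intro r f
      rw [mul_add, mul_one, Finset.prod_range_add]
    rw [key 12, key 4, key 3, key 12, Finset.prod_range_succ _ K]
    have e : (∏ t ∈ Finset.range 12, if (¬ 4 ∣ (12 * K + t+1) ∧ ¬ 3 ∣ (12 * K + t+1)) then g (12 * K + t+1) else 1) =
       g (12 * K + 1) * g (12 * K + 2) * g (12 * K + 5) * g (12 * K + 7) * g (12 * K + 10) * g (12 * K + 11) := by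
      have c : ∀ t, (¬ 4 ∣ (12 * K + t+1) ∧ ¬ 3 ∣ (12 * K + t+1)) ↔ (¬ 4 ∣ (t+1) ∧ ¬ 3 ∣ (t+1)) := by
        intro t; omega
      simp only [c]
      simp [Finset.prod_range_succ]
    rw [e]
    simp only [Finset.prod_range_succ, Finset.prod_range_zero, one_mul]
    simp only [show ∀ t, 3 * (4 * K + t + 1) = 12 * K + 3 * (t + 1) by intro t; ring,
      show ∀ t, 4 * (3 * K + t + 1) = 12 * K + 4 * (t + 1) by intro t; ring,
      show 12 * (K + 1) = 12 * K + 12 by ring]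
    norm_num [add_assoc] at ih ⊢
    rw [show 3 * (4 * K + 1) = 12 * K + 3 by ring, show 4 * (3 * K + 1) = 12 * K + 4 by ring]
    linear_combination (g (12 * K + 1) * g (12 * K + 2) * g (12 * K + 5) * g (12 * K + 7) * g (12 * K + 10) * g (12 * K + 11)
      * (g (12 * K + 3) * g (12 * K + 6) * g (12 * K + 9) * g (12 * K + 12))
      * (g (12 * K + 4) * g (12 * K + 8) * g (12 * K + 12))) * ih

theorem aux_tele {R : Type*} [CommRing R] (q y : R) (Q : ℕ → R)
    (hQ : ∀ s, Q (s+1) * (1 - q^(s+1)) = Q s * (1 + q^(s+1))) (N : ℕ) :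
    (1 - y) * (∑ s ∈ Finset.range N, (-1)^(s+1) * (q * 1)^(s+1) * y^(s+1) * (Q (s+1) + Q s))
    - (1 + y) * (∑ s ∈ Finset.range N, (-1)^(s+1) * y^(s+1) * (Q (s+1) + Q s))
    = 2 * y * Q 0 - 2 * (-1)^N * y^(N+1) * Q N := by
  induction N with
  | zero => simp
  | succ N ih =>
    rw [Finset.sum_range_succ, Finset.sum_range_succ]
    have := hQ N
    linear_combination ih + (-1)^(N+1) * y^(N+1) * (y - 1) * this

theorem aux_gauss {R : Type*} [CommRing R] [IsDomain R] (q : R) (hq : ∀ s, q ^ (s+1) ≠ 1) (Q : ℕ → R)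
    (h0 : Q 0 = 1)
    (hQ : ∀ s, Q (s+1) * (1 - q^(s+1)) = Q s * (1 + q^(s+1))) (n : ℕ) :
    (1 + 2 * ∑ s ∈ Finset.range n, (-1)^(s+1) * q^((s+1)^2)) * Q n =
    1 + ∑ s ∈ Finset.range n, (-1)^(s+1) * q^((s+1) * (n+1)) * (Q (s+1) + Q s) := by
  induction n with
  | zero => simp [h0]
  | succ n ih =>
    have hne : (1 - q^(n+1)) ≠ 0 := sub_ne_zero.mpr (hq n).symm
    apply mul_right_cancel₀ hne
    have ht := aux_tele q (q^(n+1)) Q hQ (n+1)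
    have e1 : ∑ s ∈ Finset.range (n+1), (-1)^(s+1) * q^((s+1) * (n+1+1)) * (Q (s+1) + Q s)
       = ∑ s ∈ Finset.range (n+1), (-1)^(s+1) * (q * 1)^(s+1) * (q^(n+1))^(s+1) * (Q (s+1) + Q s) := by
      refine Finset.sum_congr rfl fun s _ => ?_
      ring
    have e2 : ∑ s ∈ Finset.range n, (-1)^(s+1) * q^((s+1) * (n+1)) * (Q (s+1) + Q s)
       = ∑ s ∈ Finset.range n, (-1)^(s+1) * (q^(n+1))^(s+1) * (Q (s+1) + Q s) := by
      refine Finset.sum_congr rfl fun s _ => ?_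
      ring
    rw [e1]
    rw [e2] at ih
    generalize (∑ s ∈ Finset.range (n+1), (-1)^(s+1) * (q * 1)^(s+1) * (q^(n+1))^(s+1) * (Q (s+1) + Q s)) = A at *
    rw [Finset.sum_range_succ _ n] at ht ⊢
    generalize (∑ s ∈ Finset.range n, (-1)^(s+1) * (q^(n+1))^(s+1) * (Q (s+1) + Q s)) = B at *
    generalize (∑ s ∈ Finset.range n, (-1)^(s+1) * q^((s+1)^2)) = F at *
    have := hQ n
    rw [h0] at ht
    have e3 : q^((n+1)^2) = (q^(n+1))^(n+1) := by ring
    rw [e3]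
    generalize hy : q^(n+1) = y at *
    have e4 : y^(n+1+1) = y^(n+1)*y := by ring
    have e5 : (-1:R)^(n+1) = -(-1)^n := by ring
    rw [e4, e5] at ht
    rw [e5]
    generalize y^(n+1) = z at *
    generalize (-1:R)^n = e at *
    linear_combination (1 + y) * ih - ht + (1 + 2 * F) * this - e * z * this

theorem aux_sq {R : Type*} [CommRing R] (f : ℕ → R) (n : ℕ) :
    ∃ t, (∑ s ∈ Finset.range n, f s)^2 = (∑ s ∈ Finset.range n, f s ^ 2) + 2 * t := by
  induction n with
  | zero => exact ⟨0, by simp⟩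
  | succ n ih =>
    obtain ⟨t, ht⟩ := ih
    refine ⟨t + f n * ∑ s ∈ Finset.range n, f s, ?_⟩
    rw [Finset.sum_range_succ, Finset.sum_range_succ]
    linear_combination ht

open PowerSeries in
/-- the signed theta sums -/
noncomputable def auxS (k n : ℕ) : ℤ⟦X⟧ :=
  ∑ s ∈ Finset.range n, (-1)^(s+1) * ((X : ℤ⟦X⟧)^k)^((s+1)^2)

open PowerSeries in
theorem auxS_inv (k n N : ℕ) (hk : k ≠ 0) (hN : N < k * (n + 1)) :
    ∃ r : ℤ⟦X⟧, (1 + 2 * auxS k n) * (∏ j ∈ Finset.range n, auxG (k * (j+1))) = 1 + X^(N+1) * r := by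
  have h := aux_gauss ((X : ℤ⟦X⟧)^k) (by
    intro s hs
    rw [← pow_mul] at hs
    have := congrArg (coeff 0) hs
    simp [hk] at this) (fun n => ∏ j ∈ Finset.range n, auxG (k * (j+1))) (by simp) (by
      intro s
      simp only [Finset.prod_range_succ]
      have := auxG_mul (k * (s+1)) (by positivity)
      rw [← pow_mul]
      linear_combination (∏ j ∈ Finset.range s, auxG (k * (j+1))) * this) n
  rw [auxS, h]
  have : (X : ℤ⟦X⟧)^(N+1) ∣ ∑ s ∈ Finset.range n, (-1)^(s+1) * ((X : ℤ⟦X⟧)^k)^((s+1) * (n+1)) *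
      ((∏ j ∈ Finset.range (s+1), auxG (k * (j+1))) + ∏ j ∈ Finset.range s, auxG (k * (j+1))) := by
    refine Finset.dvd_sum fun s _ => ?_
    rw [← pow_mul]
    refine Dvd.dvd.mul_right (Dvd.dvd.mul_left (pow_dvd_pow _ ?_) _) _
    nlinarith [Nat.zero_le (k * s * (n+1))]
  obtain ⟨r, hr⟩ := this
  exact ⟨r, by rw [hr]⟩

open PowerSeries in
theorem aux_coeff_mono (N s e : ℕ) (h : N ≠ e) : coeff N ((-1)^s * (X : ℤ⟦X⟧)^e) = 0 := by
  rcases neg_one_pow_eq_or ℤ⟦X⟧ s with h' | h' <;> simp [h', coeff_X_pow, h]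

open PowerSeries in
theorem auxS_coeff (k n N : ℕ) (h : ∀ a, N ≠ k * a^2) : coeff N (auxS k n) = 0 := by
  rw [auxS, map_sum]
  refine Finset.sum_eq_zero fun s _ => ?_
  rw [← pow_mul]
  exact aux_coeff_mono _ _ _ (h _)

open PowerSeries in
theorem auxS_mul_coeff (k n l m N : ℕ) (h : ∀ a b, N ≠ k * a^2 + l * b^2) :
    coeff N (auxS k n * auxS l m) = 0 := by
  rw [auxS, auxS, Finset.sum_mul_sum, map_sum]
  refine Finset.sum_eq_zero fun s _ => ?_
  rw [map_sum]
  refine Finset.sum_eq_zero fun t _ => ?_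
  rw [← pow_mul, ← pow_mul, mul_mul_mul_comm, ← pow_add, ← pow_add]
  exact aux_coeff_mono _ _ _ (h _ _)

open PowerSeries in
theorem auxS_sq_coeff (k n N : ℕ) : ∃ t : ℤ, coeff N (auxS k n ^ 2) =
    (∑ s ∈ Finset.range n, if N = 2 * k * (s+1)^2 then 1 else 0) + 2 * t := by
  obtain ⟨t, ht⟩ := aux_sq (fun s => (-1)^(s+1) * ((X : ℤ⟦X⟧)^k)^((s+1)^2)) n
  refine ⟨coeff N t, ?_⟩
  rw [auxS, ht, map_add, map_sum]
  congr 1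
  · refine Finset.sum_congr rfl fun s _ => ?_
    rw [mul_pow, ← pow_mul, mul_comm (s+1) 2, pow_mul, neg_one_sq, one_pow, one_mul, ← pow_mul,
      ← pow_mul, coeff_X_pow]
    congr 2
    ring
  · rw [two_mul, two_mul, map_add]

theorem aux_mod4 (m : ℕ) (hm : Odd m) : (2 * m^2) % 4 = 2 := by
  obtain ⟨r, rfl⟩ := hm
  have : 2 * (2*r+1)^2 = 4 * (2 * r^2 + 2 * r) + 2 := by ring
  omega

theorem aux_sqmod (a : ℕ) : a^2 % 4 = 0 ∨ a^2 % 4 = 1 := by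
  rcases Nat.even_or_odd' a with ⟨r, rfl | rfl⟩
  · left; have : (2*r)^2 = 4 * r^2 := by ring
    omega
  · right; have : (2*r+1)^2 = 4 * (r^2 + r) + 1 := by ring
    omega

open PowerSeries in
theorem Rbar_four_three_odd_square (n : ℕ) (hn : 1 ≤ n)
    (h : ∃ m : ℕ, Odd m ∧ 0 < m ∧ n = m ^ 2) :
    Rbar 4 3 (2 * n) ≡ 4 [MOD 8] := by
  obtain ⟨m, hm, hm0, rfl⟩ := h
  have hN4 := aux_mod4 m hm
  obtain ⟨M0, hM⟩ := aux_coeff (2 * m^2)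
  obtain ⟨K, hK1, hK2, hK3⟩ : ∃ K, M0 ≤ K ∧ 2 * m^2 ≤ K ∧ m ≤ K :=
    ⟨M0 + 2 * m^2 + m, by omega, by omega, by omega⟩
  have hR := hM (12 * K) (by omega)
  have hp := aux_prod auxG K
  obtain ⟨r1, h1⟩ := auxS_inv 1 (12 * K) (2 * m^2) (by norm_num) (by omega)
  obtain ⟨r3, h3⟩ := auxS_inv 3 (4 * K) (2 * m^2) (by norm_num) (by omega)
  obtain ⟨r4, h4⟩ := auxS_inv 4 (3 * K) (2 * m^2) (by norm_num) (by omega)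
  obtain ⟨r12, h12⟩ := auxS_inv 12 K (2 * m^2) (by norm_num) (by omega)
  have c3 := auxS_coeff 3 (4 * K) (2 * m^2) (by
    intro a; have := aux_sqmod a; omega)
  have c4 := auxS_coeff 4 (3 * K) (2 * m^2) (by
    intro a; have := aux_sqmod a; omega)
  have c1 := auxS_coeff 1 (12 * K) (2 * m^2) (by
    intro a; have := aux_sqmod a; omega)
  have c12 := auxS_coeff 12 K (2 * m^2) (by
    intro a; have := aux_sqmod a; omega)
  have c43 := auxS_mul_coeff 4 (3 * K) 3 (4 * K) (2 * m^2) (by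
    intro a b; have := aux_sqmod a; have := aux_sqmod b; omega)
  have c41 := auxS_mul_coeff 4 (3 * K) 1 (12 * K) (2 * m^2) (by
    intro a b; have := aux_sqmod a; have := aux_sqmod b; omega)
  have c412 := auxS_mul_coeff 4 (3 * K) 12 K (2 * m^2) (by
    intro a b; have := aux_sqmod a; have := aux_sqmod b; omega)
  have c31 := auxS_mul_coeff 3 (4 * K) 1 (12 * K) (2 * m^2) (by
    intro a b; have := aux_sqmod a; have := aux_sqmod b; omega)
  have c312 := auxS_mul_coeff 3 (4 * K) 12 K (2 * m^2) (by
    intro a b; have := aux_sqmod a; have := aux_sqmod b; omega)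
  have c112 := auxS_mul_coeff 1 (12 * K) 12 K (2 * m^2) (by
    intro a b; have := aux_sqmod a; have := aux_sqmod b; omega)
  have c1212 := auxS_mul_coeff 12 K 12 K (2 * m^2) (by
    intro a b; have := aux_sqmod a; have := aux_sqmod b; omega)
  obtain ⟨t, c11⟩ := auxS_sq_coeff 1 (12 * K) (2 * m^2)
  have hsum : (∑ s ∈ Finset.range (12 * K), if 2 * m^2 = 2 * 1 * (s+1)^2 then (1:ℤ) else 0) = 1 := by
    rw [Finset.sum_eq_single (m - 1)]
    · rw [Nat.sub_add_cancel hm0]; simp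
    · intro b _ hb
      rw [if_neg]
      intro hh
      have : m^2 = (b+1)^2 := by omega
      have := Nat.pow_left_injective (n := 2) (by norm_num) this
      omega
    · intro hh
      exact absurd (Finset.mem_range.mpr (by omega)) hh
  rw [hsum] at c11
  have hNpos : 2 * m^2 ≠ 0 := by omega
  generalize 2 * m^2 = N at *
  generalize (∏ i ∈ Finset.range (12 * K),
      if (¬ 4 ∣ (i+1) ∧ ¬ 3 ∣ (i+1)) then auxG (i+1) else (1 : ℤ⟦X⟧)) = P at *
  generalize (∏ j ∈ Finset.range (4 * K), auxG (3 * (j+1))) = Q3 at *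
  generalize (∏ j ∈ Finset.range (3 * K), auxG (4 * (j+1))) = Q4 at *
  generalize (∏ j ∈ Finset.range (12 * K), auxG (1 * (j+1))) = Q1 at *
  generalize (∏ j ∈ Finset.range K, auxG (12 * (j+1))) = Q12 at *
  generalize auxS 1 (12 * K) = S1 at *
  generalize auxS 3 (4 * K) = S3 at *
  generalize auxS 4 (3 * K) = S4 at *
  generalize auxS 12 K = S12 at *
  -- P * φ1 * φ12 = φ3 * φ4 modulo X^(N+1)
  obtain ⟨W, hW⟩ : ∃ W, P * (1 + 2 * S1) * (1 + 2 * S12) =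
      (1 + 2 * S3) * (1 + 2 * S4) + X^(N+1) * W := by
    generalize (X : ℤ⟦X⟧)^(N+1) = x at *
    refine ⟨(1 + 2 * S3) * (1 + 2 * S4) * (r1 + r12 + x * r1 * r12)
      - P * (1 + 2 * S1) * (1 + 2 * S12) * (r3 + r4 + x * r3 * r4), ?_⟩
    have e1 : P * (1 + 2 * S1) * (1 + 2 * S12) * ((1 + x * r3) * (1 + x * r4)) =
        (1 + 2 * S3) * (1 + 2 * S4) * ((1 + x * r1) * (1 + x * r12)) := by
      rw [← h1, ← h3, ← h4, ← h12]
      linear_combination (1 + 2 * S1) * (1 + 2 * S12) * (1 + 2 * S3) * (1 + 2 * S4) * hp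
    linear_combination e1
  obtain ⟨Z, V, hZ⟩ : ∃ Z V : ℤ⟦X⟧, P = 1 + (2:ℤ) • (S4 + S3 - S1 - S12) + (4:ℤ) • (S1 ^ 2 + S12 * S12 + S4 * S3
      - S4 * S1 - S4 * S12 - S3 * S1 - S3 * S12 + S1 * S12) + (8:ℤ) • Z + X^(N+1) * V := by
    generalize (X : ℤ⟦X⟧)^(N+1) = x at *
    simp only [zsmul_eq_mul]
    push_cast
    have e2 : P * (1 + 8 * S1^3) * (1 + 8 * S12^3) = ((1 + 2 * S3) * (1 + 2 * S4) + x * W) *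
       ((1 - 2 * S1 + 4 * S1^2) * (1 - 2 * S12 + 4 * S12^2)) := by
      rw [← hW]; ring
    refine ⟨(S4 * S3 * (- S1 - S12 + 2 * S1 * S12)
        + (S4 + S3) * S1 * S12) + (S4 + S3 + 2 * S4 * S3) * (S1^2 + S12^2)
        - (1 + 2 * S3) * (1 + 2 * S4) * (S1^2 * S12 + S12^2 * S1 - 2 * S1^2 * S12^2)
        - P * (S1^3 + S12^3 + 8 * S1^3 * S12^3),
      W * ((1 - 2 * S1 + 4 * S1^2) * (1 - 2 * S12 + 4 * S12^2)), ?_⟩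
    linear_combination e2
  rw [hZ] at hR
  have cX : coeff N ((X : ℤ⟦X⟧)^(N+1) * V) = 0 := by
    rw [coeff_X_pow_mul']; simp
  simp only [map_add, map_sub, map_zsmul, c1, c3, c4, c12, c43, c41, c412, c31, c312, c112, c1212,
    c11, cX, coeff_one, if_neg hNpos, smul_eq_mul] at hR
  rw [← Int.natCast_modEq_iff, hR]
  rw [Int.modEq_iff_dvd]
  push_cast
  exact ⟨- t - coeff N Z, by ring⟩
end
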